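/- Let G be the group presented by the generating set S and relation set R of Theorem 2.14 (the presentation of the virtual Thompson group VF) as described in the context. Then G is totally orderable (bi-orderable): there exists a linear order ≤ on G such that for all a, b, c ∈ G, a ≤ b implies both c·a ≤ c·b and a·c ≤ b·c. -/

import Mathlib

/-- The alphabet Σ = {x, v}. -/
inductive Letter : Type
  | x | v
deriving DecidableEq

/-- Words on Σ (possibly empty). -/
abbrev Word := List Letter

/-- A target word t ∈ {xx, xv, vx, vv}, encoded as the pair of its two letters. -/
abbrev Tgt := Letter × Letter

/-- The word (of length two) corresponding to a target. -/
def tw (t : Tgt) : Word := [t.1, t.2]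

/-- Index for the three generators of family (i): X_{v→vv}, X_{v→vx}, X_{v→xv}. -/
inductive G1 : Type
  | vv   -- X_{v→vv}
  | vx   -- X_{v→vx}
  | xv   -- X_{v→xv}
deriving DecidableEq

/-- Index for the four kinds of generators of family (iii):
X_{x→vv,u}, X_{x→vx,u}, X_{v→xx,u}, X_{v→xv,u}. -/
inductive G3 : Type
  | xvv  -- X_{x→vv,u}
  | xvx  -- X_{x→vx,u}
  | vxx  -- X_{v→xx,u}
  | vxv  -- X_{v→xv,u}
deriving DecidableEq

/-- The generating set S of the presentation of the virtual Thompson group VF. -/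
inductive Gen : Type
  /-- family (i): X_{v→vv}, X_{v→vx}, X_{v→xv} -/
  | fam1 : G1 → Gen
  /-- family (ii): X_{a, s→t, u} with a ∈ {x,v}, s ∈ {x,v}, t ∈ {xx,xv,vx,vv}, u any word -/
  | fam2 : Letter → Letter → Tgt → Word → Gen
  /-- family (iii): X_{c, u} with c one of x→vv, x→vx, v→xx, v→xv and u a nonempty word -/
  | fam3 : G3 → {u : Word // u ≠ []} → Gen

/-- The corresponding generator of the free group on S. -/
def X (g : Gen) : FreeGroup Gen := FreeGroup.of g

open Letter in
/-- The relators of the presentation of VF (each relation A·B = C·D becomes the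
relator A·B·(C·D)⁻¹). -/
inductive VFRel : FreeGroup Gen → Prop
  /-- (R1) and (R2): for a ∈ {x, v},
  X_{a,s₁→t₁, p s₂ q} X_{a,s₂→t₂, q} = X_{a,s₂→t₂, q} X_{a,s₁→t₁, p t₂ q}. -/
  | r12 (a s₁ s₂ : Letter) (t₁ t₂ : Tgt) (p q : Word) :
      VFRel (X (.fam2 a s₁ t₁ (p ++ [s₂] ++ q)) * X (.fam2 a s₂ t₂ q) *
        (X (.fam2 a s₂ t₂ q) * X (.fam2 a s₁ t₁ (p ++ tw t₂ ++ q)))⁻¹)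
  /-- (R3): X_{x,s→t,q} X_{x→vv, p t q} = X_{x→vv, p s q} X_{v,s→t,q}. -/
  | r3 (s : Letter) (t : Tgt) (p q : Word) :
      VFRel (X (.fam2 x s t q) * X (.fam3 .xvv ⟨p ++ tw t ++ q, by simp [tw]⟩) *
        (X (.fam3 .xvv ⟨p ++ [s] ++ q, by simp⟩) * X (.fam2 v s t q))⁻¹)
  /-- (R4): X_{x,s→t,q} X_{x→vx, p t q} = X_{x→vx, p s q} X_{v,s→t,q}. -/
  | r4 (s : Letter) (t : Tgt) (p q : Word) :
      VFRel (X (.fam2 x s t q) * X (.fam3 .xvx ⟨p ++ tw t ++ q, by simp [tw]⟩) *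
        (X (.fam3 .xvx ⟨p ++ [s] ++ q, by simp⟩) * X (.fam2 v s t q))⁻¹)
  /-- (R5): X_{v,s→t,q} X_{v→xx, p t q} = X_{v→xx, p s q} X_{x,s→t,q}. -/
  | r5 (s : Letter) (t : Tgt) (p q : Word) :
      VFRel (X (.fam2 v s t q) * X (.fam3 .vxx ⟨p ++ tw t ++ q, by simp [tw]⟩) *
        (X (.fam3 .vxx ⟨p ++ [s] ++ q, by simp⟩) * X (.fam2 x s t q))⁻¹)
  /-- (R6): X_{v,s→t,q} X_{v→xv, p t q} = X_{v→xv, p s q} X_{x,s→t,q}. -/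
  | r6 (s : Letter) (t : Tgt) (p q : Word) :
      VFRel (X (.fam2 v s t q) * X (.fam3 .vxv ⟨p ++ tw t ++ q, by simp [tw]⟩) *
        (X (.fam3 .vxv ⟨p ++ [s] ++ q, by simp⟩) * X (.fam2 x s t q))⁻¹)

/-- The set of relators. -/
def VFrels : Set (FreeGroup Gen) := {g | VFRel g}

/-- The virtual Thompson group VF, as the presented group ⟨S | R⟩. -/
abbrev VF := PresentedGroup VFrels


namespace VFP

theorem order_of_cone {G : Type} [Group G] (P : G → Prop) (h1 : ¬ P 1)
    (hmul : ∀ a b, P a → P b → P (a * b)) (hconj : ∀ g a, P a → P (g * a * g⁻¹))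
    (htri : ∀ a, a = 1 ∨ P a ∨ P a⁻¹) :
    ∃ r : LinearOrder G, ∀ a b c : G, r.le a b → r.le (c * a) (c * b) ∧ r.le (a * c) (b * c) := by
  classical
  refine ⟨{ le := fun a b => a = b ∨ P (a⁻¹ * b)
            le_refl := fun a => Or.inl rfl
            le_trans := ?_
            le_antisymm := ?_
            le_total := ?_
            toDecidableLE := Classical.decRel _ }, ?_⟩
  · rintro a b c (rfl | hab) (rfl | hbc)
    · exact Or.inl rfl
    · exact Or.inr hbc
    · exact Or.inr hab
    · right
      have := hmul _ _ hab hbc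
      simpa [mul_assoc] using this
  · rintro a b (rfl | hab) (h | hba)
    · rfl
    · rfl
    · exact h.symm
    · exfalso
      have := hmul _ _ hab hba
      apply h1
      simpa [mul_assoc] using this
  · intro a b
    rcases htri (a⁻¹ * b) with h | h | h
    · left; left
      exact (inv_mul_eq_one.1 h)
    · left; right; exact h
    · right; right; simpa using h
  · intro a b c hab
    rcases hab with rfl | hab
    · exact ⟨Or.inl rfl, Or.inl rfl⟩
    · refine ⟨Or.inr ?_, Or.inr ?_⟩
      · simpa [mul_assoc] using hab
      · have := hconj c⁻¹ _ hab
        simpa [mul_assoc] using this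

/-- Increasing bijections of the line that move points upward right after a fixed ray. -/
def PF (f : ℝ ≃o ℝ) : Prop :=
  ∃ c d : ℝ, c < d ∧ (∀ t ≤ c, f t = t) ∧ ∀ t, c < t → t < d → t < f t

theorem PF_one : ¬ PF 1 := by
  rintro ⟨c, d, hcd, -, h⟩
  have := h ((c + d) / 2) (by linarith) (by linarith)
  simp at this

theorem PF_mul (f g : ℝ ≃o ℝ) (hf : PF f) (hg : PF g) : PF (f * g) := by
  obtain ⟨c, d, hcd, h0, h1⟩ := hf
  obtain ⟨c', d', hcd', h0', h1'⟩ := hg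
  rcases lt_trichotomy c c' with h | h | h
  · refine ⟨c, min d c', lt_min hcd h, ?_, ?_⟩
    · intro t ht
      simp [RelIso.mul_apply, h0' t (by linarith), h0 t ht]
    · intro t ht ht'
      have := lt_min_iff.1 ht'
      rw [RelIso.mul_apply, h0' t (by linarith)]
      exact h1 t ht this.1
  · subst h
    refine ⟨c, min d d', lt_min hcd hcd', ?_, ?_⟩
    · intro t ht
      simp [RelIso.mul_apply, h0' t (by linarith), h0 t ht]
    · intro t ht ht'
      have := lt_min_iff.1 ht'
      rw [RelIso.mul_apply]
      have a := h1' t ht this.2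
      have b := h1 t ht this.1
      have := f.lt_iff_lt.2 a
      linarith
  · refine ⟨c', min d' c, lt_min hcd' h, ?_, ?_⟩
    · intro t ht
      simp [RelIso.mul_apply, h0' t (by linarith), h0 t (by linarith)]
    · intro t ht ht'
      have := lt_min_iff.1 ht'
      rw [RelIso.mul_apply]
      have a := h1' t ht this.1
      have b := h0 t this.2.le
      have := f.lt_iff_lt.2 a
      linarith

theorem PF_conj (g f : ℝ ≃o ℝ) (hf : PF f) : PF (g * f * g⁻¹) := by
  obtain ⟨c, d, hcd, h0, h1⟩ := hf
  have key : ∀ t, (g * f * g⁻¹) t = g (f (g.symm t)) := fun t => rfl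
  refine ⟨g c, g d, g.lt_iff_lt.2 hcd, ?_, ?_⟩
  · intro t ht
    rw [key, h0 _ (by rw [OrderIso.symm_apply_le]; exact ht)]
    simp
  · intro t ht ht'
    rw [key]
    have := h1 (g.symm t) (by rw [OrderIso.lt_symm_apply]; exact ht)
      (by rw [OrderIso.symm_apply_lt]; exact ht')
    have := g.lt_iff_lt.2 this
    simpa using this

/-- Right germs are affine, and the negative ray is fixed. -/
def RA (f : ℝ ≃o ℝ) : Prop :=
  (∀ t ≤ 0, f t = t) ∧ ∀ c : ℝ, ∃ d α β : ℝ, c < d ∧ ∀ t, c ≤ t → t < d → f t = α * t + β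

theorem RA_one : RA 1 := by
  refine ⟨fun t _ => rfl, fun c => ⟨c + 1, 1, 0, by linarith, fun t _ _ => by simp⟩⟩

theorem RA_mul (f g : ℝ ≃o ℝ) (hf : RA f) (hg : RA g) : RA (f * g) := by
  refine ⟨fun t ht => by rw [RelIso.mul_apply, hg.1 t ht, hf.1 t ht], fun c => ?_⟩
  obtain ⟨d, α, β, hd, h⟩ := hg.2 c
  obtain ⟨d', α', β', hd', h'⟩ := hf.2 (g c)
  refine ⟨min d (g.symm d'), α' * α, α' * β + β', lt_min hd (by rw [OrderIso.lt_symm_apply]; exact hd'), ?_⟩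
  intro t ht ht'
  have := lt_min_iff.1 ht'
  rw [RelIso.mul_apply, h' (g t) (g.le_iff_le.2 ht) (by rw [← OrderIso.lt_symm_apply]; exact this.2),
    h t ht this.1]
  ring

theorem RA_inv (f : ℝ ≃o ℝ) (hf : RA f) : RA f⁻¹ := by
  have key : ∀ t, f⁻¹ t = f.symm t := fun t => rfl
  refine ⟨fun t ht => by rw [key, OrderIso.symm_apply_eq, hf.1 t ht], fun c => ?_⟩
  obtain ⟨d, α, β, hd, h⟩ := hf.2 (f.symm c)
  have hα : α ≠ 0 := by
    rintro rfl
    have a := h (f.symm c) le_rfl hd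
    have b := h ((f.symm c + d) / 2) (by linarith) (by linarith)
    have : f (f.symm c) < f ((f.symm c + d) / 2) := f.lt_iff_lt.2 (by linarith)
    linarith
  refine ⟨f d, α⁻¹, - β / α, by rw [← OrderIso.symm_apply_lt]; exact hd, ?_⟩
  intro t ht ht'
  have := h (f.symm t) (f.symm.le_iff_le.2 ht) (by rw [OrderIso.symm_apply_lt]; exact ht')
  rw [OrderIso.apply_symm_apply] at this
  rw [key]
  field_simp
  linarith

theorem RA_tri (f : ℝ ≃o ℝ) (hf : RA f) : f = 1 ∨ PF f ∨ PF f⁻¹ := by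
  by_cases hf1 : f = 1
  · exact Or.inl hf1
  right
  let S : Set ℝ := {c | ∀ t ≤ c, f t = t}
  have h0 : (0 : ℝ) ∈ S := hf.1
  have hb : BddAbove S := by
    by_contra hb
    apply hf1
    ext t
    rw [not_bddAbove_iff] at hb
    obtain ⟨c, hc, htc⟩ := hb t
    exact hc t htc.le
  set c := sSup S with hc
  have hlt : ∀ t < c, f t = t := by
    intro t ht
    obtain ⟨s, hs, hts⟩ := exists_lt_of_lt_csSup ⟨0, h0⟩ ht
    exact hs t hts.le
  have hfc : f c = c := by
    rcases lt_trichotomy (f c) c with h | h | h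
    · have := hlt _ h
      have := f.injective this
      linarith
    · exact h
    · have h2 : f.symm ((c + f c) / 2) < c := by
        rw [OrderIso.symm_apply_lt]; linarith
      have h3 := hlt _ h2
      rw [OrderIso.apply_symm_apply] at h3
      linarith
  have hle : ∀ t ≤ c, f t = t := by
    intro t ht
    rcases ht.lt_or_eq with h | h
    · exact hlt t h
    · rw [h, hfc]
  obtain ⟨d, α, β, hd, h⟩ := hf.2 c
  have hcc := h c le_rfl hd
  rw [hfc] at hcc
  rcases lt_trichotomy α 1 with h1 | h1 | h1
  · right
    refine ⟨c, f d, by rw [← hfc]; exact f.lt_iff_lt.2 hd, ?_, ?_⟩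
    · intro t ht
      change f.symm t = t
      rw [OrderIso.symm_apply_eq, hle t ht]
    · intro s hs hs'
      change s < f.symm s
      have a : c < f.symm s := by rw [OrderIso.lt_symm_apply, hfc]; exact hs
      have b : f.symm s < d := by rw [OrderIso.symm_apply_lt]; exact hs'
      have e := h _ a.le b
      rw [OrderIso.apply_symm_apply] at e
      nlinarith
  · exfalso
    have : (c + d) / 2 ∈ S := by
      intro t ht
      rcases le_or_gt t c with h2 | h2
      · exact hle t h2
      · rw [h t h2.le (by linarith)]
        subst h1
        linarith
    have := le_csSup hb this
    linarith
  · left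
    refine ⟨c, d, hd, hle, ?_⟩
    intro t ht ht'
    rw [h t ht.le ht']
    nlinarith

/-- The elementary expanding map at `j`. -/
noncomputable def xiFun (j : ℕ) (t : ℝ) : ℝ :=
  if t ≤ j then t else if t ≤ j + 1 then 2 * t - j else t + 1

noncomputable def xiInv (j : ℕ) (t : ℝ) : ℝ :=
  if t ≤ j then t else if t ≤ j + 2 then (t + j) / 2 else t - 1

theorem xiFun_strictMono (j : ℕ) : StrictMono (xiFun j) := by
  intro s t hst
  unfold xiFun
  split_ifs <;> linarith

theorem xi_right (j : ℕ) (t : ℝ) : xiFun j (xiInv j t) = t := by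
  unfold xiFun xiInv
  split_ifs <;> linarith

noncomputable def xi (j : ℕ) : ℝ ≃o ℝ :=
  (xiFun_strictMono j).orderIsoOfRightInverse (xiFun j) (xiInv j) (xi_right j)

theorem xi_apply (j : ℕ) (t : ℝ) : xi j t = xiFun j t := rfl

theorem xi_of_le {j : ℕ} {t : ℝ} (h : t ≤ j) : xi j t = t := by
  rw [xi_apply, xiFun, if_pos h]

theorem xi_of_ge {j : ℕ} {t : ℝ} (h : (j : ℝ) + 1 ≤ t) : xi j t = t + 1 := by
  rw [xi_apply, xiFun]
  split_ifs <;> linarith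

theorem xi_half (j : ℕ) : xi j (j + 1 / 2) = j + 1 := by
  rw [xi_apply, xiFun]
  split_ifs <;> linarith

theorem le_xi (j : ℕ) (t : ℝ) : t ≤ xi j t := by
  rw [xi_apply, xiFun]
  split_ifs <;> linarith

theorem xi_succ (j : ℕ) (t : ℝ) : xi (j + 1) (t + 1) = xi j t + 1 := by
  simp only [xi_apply, xiFun]
  push_cast
  split_ifs <;> linarith

theorem xi_rel {k n : ℕ} (h : k < n) : xi k * xi n = xi (n + 1) * xi k := by
  ext t
  simp only [RelIso.mul_apply, xi_apply, xiFun]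
  have : (k : ℝ) + 1 ≤ n := by exact_mod_cast h
  push_cast
  split_ifs <;> linarith

theorem RA_xi (j : ℕ) : RA (xi j) := by
  refine ⟨fun t ht => xi_of_le (ht.trans (by positivity)), fun c => ?_⟩
  simp only [xi_apply, xiFun]
  rcases lt_or_ge c j with h | h
  · exact ⟨j, 1, 0, h, fun t _ ht => by rw [if_pos ht.le]; ring⟩
  rcases lt_or_ge c (j + 1) with h2 | h2
  · refine ⟨j + 1, 2, -j, h2, fun t ht ht' => ?_⟩
    split_ifs <;> linarith
  · refine ⟨c + 1, 1, 1, by linarith, fun t ht ht' => ?_⟩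
    split_ifs <;> linarith

end VFP

namespace VFP

abbrev BGen (R J : Type) := Option (R ⊕ J) × ℕ

def Brels (R J : Type) : Set (FreeGroup (BGen R J)) :=
  {g | ∃ (y : Option (R ⊕ J)) (n k : ℕ), k < n ∧
    (g = FreeGroup.of (y, n) * FreeGroup.of (none, k) *
        (FreeGroup.of (none, k) * FreeGroup.of (y, n + 1))⁻¹ ∨
     ∃ r : R, g = FreeGroup.of (y, n) * FreeGroup.of (some (Sum.inl r), k) *
        (FreeGroup.of (some (Sum.inl r), k) * FreeGroup.of (y, n))⁻¹)}

abbrev Bgrp (R J : Type) := PresentedGroup (Brels R J)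

section
variable {R J : Type}

def Y (y : Option (R ⊕ J)) (n : ℕ) : Bgrp R J := PresentedGroup.of (y, n)

theorem Y_x (y : Option (R ⊕ J)) {k n : ℕ} (h : k < n) :
    Y y n * Y none k = Y none k * Y y (n + 1) := by
  have : (FreeGroup.of (y, n) * FreeGroup.of (none, k) *
        (FreeGroup.of (none, k) * FreeGroup.of (y, n + 1))⁻¹ : FreeGroup (BGen R J)) ∈ Brels R J :=
    ⟨y, n, k, h, Or.inl rfl⟩
  have := PresentedGroup.mk_eq_one_iff.2 (Subgroup.subset_normalClosure this)
  rw [map_mul, map_inv, mul_inv_eq_one, map_mul, map_mul] at this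
  exact this

theorem Y_a (y : Option (R ⊕ J)) (r : R) {k n : ℕ} (h : k < n) :
    Y y n * Y (some (Sum.inl r)) k = Y (some (Sum.inl r)) k * Y y n := by
  have : (FreeGroup.of (y, n) * FreeGroup.of (some (Sum.inl r), k) *
        (FreeGroup.of (some (Sum.inl r), k) * FreeGroup.of (y, n))⁻¹ : FreeGroup (BGen R J))
        ∈ Brels R J :=
    ⟨y, n, k, h, Or.inr ⟨r, rfl⟩⟩
  have := PresentedGroup.mk_eq_one_iff.2 (Subgroup.subset_normalClosure this)
  rw [map_mul, map_inv, mul_inv_eq_one, map_mul, map_mul] at this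
  exact this

def Blift {K : Type*} [Group K] (F : Option (R ⊕ J) → ℕ → K)
    (h1 : ∀ y n k, k < n → F y n * F none k = F none k * F y (n + 1))
    (h2 : ∀ y r n k, k < n → F y n * F (some (Sum.inl r)) k = F (some (Sum.inl r)) k * F y n) :
    Bgrp R J →* K :=
  PresentedGroup.toGroup (f := fun p => F p.1 p.2) (by
    rintro g ⟨y, n, k, hk, rfl | ⟨r, rfl⟩⟩
    · rw [map_mul, map_inv, mul_inv_eq_one, map_mul, map_mul]
      simpa using h1 y n k hk
    · rw [map_mul, map_inv, mul_inv_eq_one, map_mul, map_mul]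
      simpa using h2 y r n k hk)

theorem Blift_Y {K : Type*} [Group K] (F : Option (R ⊕ J) → ℕ → K) (h1) (h2)
    (y : Option (R ⊕ J)) (n : ℕ) : Blift F h1 h2 (Y y n) = F y n := by
  simp [Blift, Y]

/-- Products of the basic shifting generators. -/
def px (l : List ℕ) : Bgrp R J := (l.map (Y none)).prod

@[simp] theorem px_nil : (px [] : Bgrp R J) = 1 := rfl
@[simp] theorem px_cons (j : ℕ) (l : List ℕ) : (px (j :: l) : Bgrp R J) = Y none j * px l := by
  simp [px]
theorem px_append (l l' : List ℕ) : (px (l ++ l') : Bgrp R J) = px l * px l' := by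
  simp [px]

noncomputable def th : List ℕ → (ℝ ≃o ℝ)
  | [] => 1
  | j :: l => th l * xi j

theorem th_append (l l' : List ℕ) : th (l ++ l') = th l' * th l := by
  induction l with
  | nil => simp [th]
  | cons j l ih => simp [th, ih, mul_assoc]

theorem th_snoc (l : List ℕ) (j : ℕ) (t : ℝ) : th (l ++ [j]) t = xi j (th l t) := by
  rw [th_append]; simp [th, RelIso.mul_apply]

theorem th_cons (l : List ℕ) (j : ℕ) (t : ℝ) : th (j :: l) t = th l (xi j t) := rfl

theorem th_of_le (l : List ℕ) (m : ℕ) (h : ∀ j ∈ l, m ≤ j) (t : ℝ) (ht : t ≤ m) : th l t = t := by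
  induction l with
  | nil => rfl
  | cons j l ih =>
    have hj : m ≤ j := h j (by simp)
    have : (m : ℝ) ≤ j := by exact_mod_cast hj
    rw [th_cons, xi_of_le (ht.trans this), ih (fun i hi => h i (by simp [hi]))]

theorem le_th (l : List ℕ) (t : ℝ) : t ≤ th l t := by
  induction l generalizing t with
  | nil => exact le_rfl
  | cons j l ih => rw [th_cons]; exact (le_xi j t).trans (ih _)

theorem th_succ (l : List ℕ) (t : ℝ) : th (l.map (· + 1)) (t + 1) = th l t + 1 := by
  induction l generalizing t with
  | nil => rfl
  | cons j l ih => rw [List.map_cons, th_cons, xi_succ, ih]; rfl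

theorem Y_pow (y : Option (R ⊕ J)) {k n : ℕ} (h : k < n) (a : ℕ) :
    Y y n * (Y none k) ^ a = (Y none k) ^ a * Y y (n + a) := by
  induction a generalizing n with
  | zero => simp
  | succ a ih =>
    rw [pow_succ', ← mul_assoc, Y_x y h, mul_assoc, ih (by omega), ← mul_assoc]
    congr 2; omega

theorem factor (m : ℕ) (l : List ℕ) (h : ∀ j ∈ l, m ≤ j) :
    ∃ (a : ℕ) (l1 : List ℕ), (∀ j ∈ l1, m + 1 ≤ j) ∧
      (px l : Bgrp R J) = (Y none m) ^ a * px l1 ∧ th l = th l1 * (xi m) ^ a ∧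
      l.length = a + l1.length ∧ (m ∈ l → 0 < a) := by
  induction l with
  | nil => exact ⟨0, [], by simp, by simp, by simp, by simp, by simp⟩
  | cons j l ih =>
    obtain ⟨a, l1, h1, h2, h3, h4, h5⟩ := ih (fun i hi => h i (by simp [hi]))
    rcases (h j (by simp)).eq_or_lt with hj | hj
    · subst hj
      refine ⟨a + 1, l1, h1, ?_, ?_, ?_, by simp⟩
      · rw [px_cons, h2, pow_succ', mul_assoc]
      · rw [th, h3, pow_succ, mul_assoc]
      · simp [h4]; omega
    · refine ⟨a, (j + a) :: l1, ?_, ?_, ?_, ?_, ?_⟩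
      · intro i hi
        rcases List.mem_cons.1 hi with rfl | hi
        · omega
        · exact h1 i hi
      · rw [px_cons, px_cons, h2, ← mul_assoc, Y_pow none hj, mul_assoc]
      · rw [th, th, h3, mul_assoc, mul_assoc]
        congr 1
        clear h2 h3 h4 h5 ih h
        induction a generalizing j with
        | zero => simp
        | succ a ih =>
          rw [pow_succ, mul_assoc, xi_rel hj, ← mul_assoc, ih (j + 1) (by omega), mul_assoc]
          congr 2; omega
      · simp [h4]; omega
      · intro hm
        rcases List.mem_cons.1 hm with hm | hm
        · omega
        · exact h5 hm

theorem le_xi_pow (m a : ℕ) (t : ℝ) : t ≤ ((xi m) ^ a) t := by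
  induction a generalizing t with
  | zero => exact le_rfl
  | succ a ih => rw [pow_succ, RelIso.mul_apply]; exact (le_xi m t).trans (ih _)

theorem no_extra (m a b : ℕ) (l l' : List ℕ) (h : ∀ j ∈ l, m + 1 ≤ j)
    (e : th l * (xi m) ^ a = th l' * (xi m) ^ b) : b ≤ a := by
  by_contra hlt
  obtain ⟨d, rfl⟩ : ∃ d, b = (d + 1) + a := ⟨b - a - 1, by omega⟩
  rw [pow_add, ← mul_assoc] at e
  have e := mul_right_cancel e
  have := congrArg (fun f : ℝ ≃o ℝ => f (m + 1 / 2)) e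
  simp only [RelIso.mul_apply, pow_succ, xi_half] at this
  rw [th_of_le l (m + 1) h _ (by push_cast; linarith)] at this
  have h1 := le_xi_pow m d (m + 1)
  have h2 := le_th l' ((xi m ^ d) (m + 1))
  linarith

theorem px_faithful_aux (N : ℕ) : ∀ l l' : List ℕ, l.length + l'.length ≤ N → th l = th l' →
    (px l : Bgrp R J) = px l' := by
  induction N with
  | zero =>
    intro l l' hN _
    have h1 : l = [] := List.length_eq_zero_iff.1 (by omega)
    have h2 : l' = [] := List.length_eq_zero_iff.1 (by omega)
    rw [h1, h2]
  | succ N ih =>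
    intro l l' hN e
    by_cases hne : l ++ l' = []
    · have := List.append_eq_nil_iff.1 hne
      rw [this.1, this.2]
    · have hex : ∃ m, m ∈ l ++ l' := List.exists_mem_of_ne_nil _ hne
      classical
      let m := Nat.find hex
      have hm : m ∈ l ++ l' := Nat.find_spec hex
      have hmin : ∀ j ∈ l ++ l', m ≤ j := fun j hj => Nat.find_min' hex hj
      obtain ⟨a, l1, h1, h2, h3, h4, h5⟩ := factor (R := R) (J := J) m l
        (fun j hj => hmin j (by simp [hj]))
      obtain ⟨b, l2, g1, g2, g3, g4, g5⟩ := factor (R := R) (J := J) m l'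
        (fun j hj => hmin j (by simp [hj]))
      rw [h3, g3] at e
      have hab : a = b := le_antisymm (no_extra m b a l2 l1 g1 e.symm) (no_extra m a b l1 l2 h1 e)
      subst hab
      have e := mul_right_cancel e
      have ha : 0 < a := by
        rcases List.mem_append.1 hm with h | h
        · exact h5 h
        · exact g5 h
      rw [h2, g2, ih l1 l2 (by omega) e]

theorem px_faithful (l l' : List ℕ) (h : th l = th l') : (px l : Bgrp R J) = px l' :=
  px_faithful_aux _ l l' le_rfl h

/-- The subgroup generated by the shifting generators. -/
def Fsub (R J : Type) : Subgroup (Bgrp R J) := Subgroup.closure (Set.range (Y none))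

theorem px_mem (l : List ℕ) : (px l : Bgrp R J) ∈ Fsub R J := by
  induction l with
  | nil => exact one_mem _
  | cons j l ih =>
    rw [px_cons]
    exact mul_mem (Subgroup.subset_closure ⟨j, rfl⟩) ih

theorem ore_one (l : List ℕ) (n : ℕ) : ∃ l1 l2 : List ℕ, l2.length ≤ 1 ∧
    (px l : Bgrp R J)⁻¹ * Y none n = px l2 * (px l1)⁻¹ := by
  induction l generalizing n with
  | nil => exact ⟨[], [n], by simp, by simp⟩
  | cons k l ih =>
    rw [px_cons, mul_inv_rev, mul_assoc]
    have hsub : ∃ (l2 l1 : List ℕ), l2.length ≤ 1 ∧ 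
        (Y none k : Bgrp R J)⁻¹ * Y none n = px l2 * (px l1)⁻¹ := by
      rcases lt_trichotomy k n with h | h | h
      · refine ⟨[n + 1], [k], by simp, ?_⟩
        simp only [px_cons, px_nil, mul_one]
        rw [inv_mul_eq_iff_eq_mul, ← mul_assoc, ← Y_x none h]; simp
      · subst h; exact ⟨[], [], by simp, by simp⟩
      · refine ⟨[n], [k + 1], by simp, ?_⟩
        simp only [px_cons, px_nil, mul_one]
        rw [inv_mul_eq_iff_eq_mul, ← mul_assoc, Y_x none h]; simp
    obtain ⟨l2, l1, hl, e⟩ := hsub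
    rw [e]
    match l2, hl with
    | [], _ => exact ⟨l1 ++ l, [], by simp, by simp [px_append, mul_inv_rev]⟩
    | [i], _ =>
      obtain ⟨l3, l4, hl4, e4⟩ := ih i
      refine ⟨l1 ++ l3, l4, hl4, ?_⟩
      simp only [px_cons, px_nil, mul_one]
      rw [← mul_assoc, e4, px_append, mul_inv_rev, mul_assoc]

theorem ore (f : Bgrp R J) (hf : f ∈ Fsub R J) : ∃ l l' : List ℕ, f = px l * (px l')⁻¹ := by
  induction hf using Subgroup.closure_induction_right with
  | one => exact ⟨[], [], by simp⟩
  | mul_right x _ y hy ih =>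
    obtain ⟨n, rfl⟩ := hy
    obtain ⟨l, l', rfl⟩ := ih
    obtain ⟨l1, l2, _, e⟩ := ore_one (R := R) (J := J) l' n
    exact ⟨l ++ l2, l1, by rw [mul_assoc, e, px_append, mul_assoc]⟩
  | mul_inv_cancel x _ y hy ih =>
    obtain ⟨n, rfl⟩ := hy
    obtain ⟨l, l', rfl⟩ := ih
    exact ⟨l, n :: l', by rw [px_cons, mul_inv_rev, mul_assoc]⟩

/-- Words describing a binary tree grown from the leaf at position `m`. -/
inductive Tr (m : ℕ) : List ℕ → Prop
  | nil : Tr m []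
  | snoc (v : List ℕ) (j : ℕ) : Tr m v → m ≤ j → j ≤ m + v.length → Tr m (v ++ [j])

theorem Tr.ge {m : ℕ} {v : List ℕ} (h : Tr m v) : ∀ j ∈ v, m ≤ j := by
  induction h with
  | nil => simp
  | snoc v j _ h1 _ ih =>
    intro i hi
    rcases List.mem_append.1 hi with hi | hi
    · exact ih i hi
    · simp at hi; omega

theorem Tr.succ {m : ℕ} {v : List ℕ} (h : Tr m v) : Tr (m + 1) (v.map (· + 1)) := by
  induction h with
  | nil => exact Tr.nil
  | snoc v j _ h1 h2 ih =>
    rw [List.map_append]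
    exact Tr.snoc _ _ ih (by simpa using h1) (by simp; omega)

theorem Tr.push {m : ℕ} {v : List ℕ} (h : Tr m v) (y : Option (R ⊕ J)) {n : ℕ} (hn : m + 1 ≤ n) :
    Y y n * px v = px v * Y y (n + v.length) := by
  induction h with
  | nil => simp
  | snoc v j _ h1 h2 ih =>
    rw [px_append, ← mul_assoc, ih, mul_assoc, px_cons, px_nil, mul_one, Y_x y (by omega),
      ← mul_assoc]
    congr 2
    simp; omega

theorem Tr.th {m : ℕ} {v : List ℕ} (h : Tr m v) {t : ℝ} (ht : (m : ℝ) + 1 ≤ t) :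
    th v t = t + v.length := by
  induction h with
  | nil => simp [VFP.th]
  | snoc v j _ h1 h2 ih =>
    have : (j : ℝ) ≤ m + v.length := by exact_mod_cast h2
    rw [th_snoc, ih, xi_of_ge (by linarith)]
    simp; ring

theorem push_low (v : List ℕ) (j : ℕ) (h : ∀ i ∈ v, j < i) :
    (px v : Bgrp R J) * Y none j = Y none j * px (v.map (· + 1)) := by
  induction v with
  | nil => simp
  | cons i v ih =>
    rw [px_cons, mul_assoc, ih (fun i hi => h i (by simp [hi])), ← mul_assoc,
      Y_x none (h i (by simp)), List.map_cons, px_cons, mul_assoc]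

noncomputable def om : (R ⊕ J) → ℕ → ℝ → ℝ
  | Sum.inl _, k, t => k + max 0 (min t 1)
  | Sum.inr _, k, t => k + max 0 t

def Good : (R ⊕ J) → ℕ → List ℕ → Prop
  | Sum.inl _, m, v => Tr m v
  | Sum.inr _, m, v => ∀ j ∈ v, m ≤ j

theorem Good.ge {y : R ⊕ J} {m : ℕ} {v : List ℕ} (h : Good y m v) : ∀ j ∈ v, m ≤ j := by
  cases y with
  | inl r => exact Tr.ge h
  | inr j => exact h

theorem om_ge (y : R ⊕ J) (k : ℕ) (t : ℝ) : (k : ℝ) ≤ om y k t := by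
  cases y <;> simp [om]

theorem om_zero (y : R ⊕ J) (k : ℕ) : om y k 0 = k := by
  cases y <;> simp [om]

theorem om_succ (y : R ⊕ J) (k : ℕ) (t : ℝ) : om y (k + 1) t = om y k t + 1 := by
  cases y <;> simp [om] <;> ring

theorem conj_step {K : Type*} [Group K] {a b w v x w' v' b' : K} (h : w⁻¹ * a * w = v⁻¹ * b * v)
    (h2 : (v * x)⁻¹ * b * (v * x) = v'⁻¹ * b' * v') (hw : w' = w * x) :
    w'⁻¹ * a * w' = v'⁻¹ * b' * v' := by
  rw [← h2, hw]
  calc (w * x)⁻¹ * a * (w * x) = x⁻¹ * (w⁻¹ * a * w) * x := by group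
    _ = _ := by rw [h]; group

theorem normalize (y : R ⊕ J) (k : ℕ) (p : List ℕ) : ∃ (m : ℕ) (v : List ℕ), Good y m v ∧
    (px p)⁻¹ * Y (some y) k * px p = (px v)⁻¹ * Y (some y) m * px v ∧
    ∀ t, th p (om y k t) = th v (om y m t) := by
  induction p using List.reverseRecOn with
  | nil =>
    refine ⟨k, [], ?_, rfl, fun t => rfl⟩
    cases y with
    | inl r => exact Tr.nil
    | inr j => intro j hj; simp at hj
  | append_singleton p j ih =>
    obtain ⟨m, v, hg, he, ht⟩ := ih
    have hw : (px (p ++ [j]) : Bgrp R J) = px p * Y none j := by simp [px_append]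
    rcases lt_or_ge j m with hj | hj
    · refine ⟨m + 1, v.map (· + 1), ?_, ?_, ?_⟩
      · cases y with
        | inl r => exact Tr.succ hg
        | inr j =>
          intro i hi
          obtain ⟨i', hi', rfl⟩ := List.mem_map.1 hi
          have := hg i' hi'
          omega
      · refine conj_step he ?_ hw
        rw [push_low v j (fun i hi => lt_of_lt_of_le hj (hg.ge i hi))]
        have := Y_x (some y) hj
        calc _ = (px (v.map (· + 1)))⁻¹ * ((Y none j)⁻¹ * (Y (some y) m * Y none j)) *
              px (v.map (· + 1)) := by group
          _ = _ := by rw [this]; group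
      · intro t
        rw [th_snoc, ht, om_succ, th_succ, xi_of_ge]
        have h1 := le_th v (om y m t)
        have h2 := om_ge y m t
        have h3 : (j : ℝ) + 1 ≤ m := by exact_mod_cast hj
        linarith
    · cases y with
      | inr i =>
        refine ⟨m, v ++ [j], ?_, ?_, ?_⟩
        · intro a ha
          rcases List.mem_append.1 ha with ha | ha
          · exact hg a ha
          · simp at ha; omega
        · refine conj_step he ?_ hw
          simp [px_append]
        · intro t
          rw [th_snoc, th_snoc, ht]
      | inl r =>
        rcases le_or_gt j (m + v.length) with hj2 | hj2
        · refine ⟨m, v ++ [j], Tr.snoc v j hg hj hj2, ?_, ?_⟩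
          · refine conj_step he ?_ hw
            simp [px_append]
          · intro t
            rw [th_snoc, th_snoc, ht]
        · refine ⟨m, v, hg, ?_, ?_⟩
          · refine conj_step he ?_ hw
            obtain ⟨n, rfl⟩ : ∃ n, j = n + v.length := ⟨j - v.length, by omega⟩
            rw [← Tr.push hg none (by omega : m + 1 ≤ n)]
            have := Y_a (J := J) none r (by omega : m < n)
            calc _ = (px v)⁻¹ * ((Y none n)⁻¹ * (Y (some (Sum.inl r)) m * Y none n)) * px v := by
                  group
              _ = _ := by rw [← this]; group
          · intro t
            rw [th_snoc, ht, xi_of_le]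
            have h1 : om (R := R) (J := J) (Sum.inl r) m t ≤ m + 1 := by
              simp [om]
            have h2 := (VFP.th v).le_iff_le.2 h1
            rw [Tr.th hg le_rfl] at h2
            have h3 : (m : ℝ) + v.length + 1 ≤ j := by exact_mod_cast hj2
            linarith

theorem norm_eq {y : R ⊕ J} {m m' : ℕ} {v v' : List ℕ} (h : Good y m v) (h' : Good y m' v')
    (e : ∀ t, th v (om y m t) = th v' (om y m' t)) :
    (px v)⁻¹ * Y (some y) m * px v = (px v')⁻¹ * Y (some y) m' * px v' := by
  have e0 := e 0
  rw [om_zero, om_zero, th_of_le v m h.ge _ le_rfl, th_of_le v' m' h'.ge _ le_rfl] at e0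
  have : m = m' := by exact_mod_cast e0
  subst this
  have : th v = th v' := by
    ext t
    rcases le_or_gt t m with ht | ht
    · rw [th_of_le v m h.ge _ ht, th_of_le v' m h'.ge _ ht]
    · cases y with
      | inr j =>
        have := e (t - m)
        simp only [om] at this
        rw [max_eq_right (by linarith)] at this
        simpa using this
      | inl r =>
        rcases le_or_gt t (m + 1) with h2 | h2
        · have := e (t - m)
          simp only [om] at this
          rw [min_eq_left (by linarith), max_eq_right (by linarith)] at this
          simpa using this
        · have := e 1
          simp only [om] at this
          rw [min_self, max_eq_right (by linarith), Tr.th h le_rfl, Tr.th h' le_rfl] at this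
          rw [Tr.th h h2.le, Tr.th h' h2.le]
          linarith
  rw [px_faithful v v' this]

theorem norm_comm {y y' : R ⊕ J} {m m' : ℕ} {v v' : List ℕ} (h : Good y m v) (h' : Good y' m' v')
    (e : ∀ s t, th v (om y m s) ≤ th v' (om y' m' t)) :
    Commute ((px v)⁻¹ * Y (some y) m * px v) ((px v')⁻¹ * Y (some y') m' * px v') := by
  cases y with
  | inr j =>
    exfalso
    have := e ((th v).symm (m' + 1) - m) 0
    rw [om_zero, th_of_le v' m' h'.ge _ le_rfl] at this
    have h2 : (th v).symm (m' + 1) ≤ om (R := R) (J := J) (Sum.inr j) m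
        ((th v).symm (m' + 1) - m) := by
      simp only [om]
      have := le_max_right 0 ((th v).symm (m' + 1) - m)
      linarith
    have h3 := (th v).le_iff_le.2 h2
    rw [OrderIso.apply_symm_apply] at h3
    linarith
  | inl r =>
    have e1 := e 1 0
    rw [om_zero, th_of_le v' m' h'.ge _ le_rfl] at e1
    simp only [om] at e1
    rw [min_self, max_eq_right (by linarith), Tr.th h le_rfl] at e1
    have hm : m + 1 + v.length ≤ m' := by exact_mod_cast e1
    have key : ∀ (z : Option (R ⊕ J)) (n : ℕ), m' ≤ n →
        Commute ((px v)⁻¹ * Y (some (Sum.inl r)) m * px v) (Y z n) := by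
      intro z n hn
      obtain ⟨i, rfl⟩ : ∃ i, n = i + v.length := ⟨n - v.length, by omega⟩
      have h1 : Y z (i + v.length) = (px v)⁻¹ * Y z i * px v := by
        rw [mul_assoc, Tr.push h z (by omega)]; group
      rw [h1]
      have h2 := Y_a z r (by omega : m < i)
      change _ * _ = _ * _
      calc _ = (px v)⁻¹ * (Y (some (Sum.inl r)) m * Y z i) * px v := by group
        _ = _ := by rw [← h2]; group
    have k2 : ∀ w : List ℕ, (∀ j ∈ w, m' ≤ j) →
        Commute ((px v)⁻¹ * Y (some (Sum.inl r)) m * px v) (px w : Bgrp R J) := by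
      intro w
      induction w with
      | nil => intro _; exact Commute.one_right _
      | cons i w ih =>
        intro hw
        rw [px_cons]
        exact (key _ _ (hw i (by simp))).mul_right (ih fun j hj => hw j (by simp [hj]))
    have k3 := k2 v' h'.ge
    exact (k3.inv_right.mul_right (key _ _ le_rfl)).mul_right k3

noncomputable def rho : Bgrp R J →* (ℝ ≃o ℝ) :=
  Blift (fun y n => match y with
    | none => (xi n)⁻¹
    | some _ => 1) (by
    intro y n k hk
    cases y with
    | none =>
      simp only
      rw [← mul_inv_rev, ← mul_inv_rev, xi_rel hk]
    | some y => simp) (by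
    intro y r n k hk
    simp)

theorem rho_x (n : ℕ) : rho (Y none n : Bgrp R J) = (xi n)⁻¹ := Blift_Y ..
theorem rho_some (y : R ⊕ J) (n : ℕ) : rho (Y (some y) n) = 1 := Blift_Y ..

theorem rho_px (l : List ℕ) : rho (px l : Bgrp R J) = (th l)⁻¹ := by
  induction l with
  | nil => simp [th]
  | cons j l ih => rw [px_cons, map_mul, ih, rho_x, th, mul_inv_rev]

theorem common (f g : Bgrp R J) (hf : f ∈ Fsub R J) (hg : g ∈ Fsub R J) :
    ∃ (h : Bgrp R J) (l l' : List ℕ), f = h * (px l)⁻¹ ∧ g = h * (px l')⁻¹ := by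
  obtain ⟨l, l', e⟩ := ore (f⁻¹ * g) (mul_mem (inv_mem hf) hg)
  refine ⟨f * px l, l, l', by group, ?_⟩
  rw [mul_assoc, ← e]; group

theorem letter_eq (y : R ⊕ J) (k k' : ℕ) (f g : Bgrp R J) (hf : f ∈ Fsub R J) (hg : g ∈ Fsub R J)
    (e : ∀ t, rho f (om y k t) = rho g (om y k' t)) :
    f * Y (some y) k * f⁻¹ = g * Y (some y) k' * g⁻¹ := by
  obtain ⟨h, l, l', rfl, rfl⟩ := common f g hf hg
  obtain ⟨m, v, h1, h2, h3⟩ := normalize y k l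
  obtain ⟨m', v', g1, g2, g3⟩ := normalize y k' l'
  have := norm_eq h1 g1 (fun t => by
    have := e t
    simp only [map_mul, map_inv, rho_px, inv_inv, RelIso.mul_apply] at this
    rw [← h3, ← g3]
    exact (rho h).injective this)
  rw [← h2, ← g2] at this
  calc _ = h * ((px l)⁻¹ * Y (some y) k * px l) * h⁻¹ := by group
    _ = _ := by rw [this]; group

theorem letter_comm (y y' : R ⊕ J) (k k' : ℕ) (f g : Bgrp R J) (hf : f ∈ Fsub R J)
    (hg : g ∈ Fsub R J) (e : ∀ s t, rho f (om y k s) ≤ rho g (om y' k' t)) :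
    Commute (f * Y (some y) k * f⁻¹) (g * Y (some y') k' * g⁻¹) := by
  obtain ⟨h, l, l', rfl, rfl⟩ := common f g hf hg
  obtain ⟨m, v, h1, h2, h3⟩ := normalize y k l
  obtain ⟨m', v', g1, g2, g3⟩ := normalize y' k' l'
  have := norm_comm h1 g1 (fun s t => by
    have := e s t
    simp only [map_mul, map_inv, rho_px, inv_inv, RelIso.mul_apply] at this
    rw [← h3, ← g3]
    exact (rho h).le_iff_le.1 this)
  rw [← h2, ← g2] at this
  have e1 : h * (px l)⁻¹ * Y (some y) k * (h * (px l)⁻¹)⁻¹ =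
      h * ((px l)⁻¹ * Y (some y) k * px l) * h⁻¹ := by group
  have e2 : h * (px l')⁻¹ * Y (some y') k' * (h * (px l')⁻¹)⁻¹ =
      h * ((px l')⁻¹ * Y (some y') k' * px l') * h⁻¹ := by group
  rw [e1, e2]
  exact SemiconjBy.conj_iff.2 this

theorem Fsub_faithful (f : Bgrp R J) (hf : f ∈ Fsub R J) (h : rho f = 1) : f = 1 := by
  obtain ⟨l, l', rfl⟩ := ore f hf
  rw [map_mul, map_inv, rho_px, rho_px, inv_inv, inv_mul_eq_one] at h
  rw [px_faithful l l' h, mul_inv_cancel]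

end
end VFP

namespace VFP

abbrev Gam (Λ : Type) := Λ × (ℝ → ℝ)

def act {Λ : Type} (σ : ℝ ≃o ℝ) (a : Gam Λ) : Gam Λ := (a.1, fun t => σ (a.2 t))

theorem act_one {Λ : Type} (a : Gam Λ) : act 1 a = a := rfl
theorem act_mul {Λ : Type} (σ τ : ℝ ≃o ℝ) (a : Gam Λ) : act (σ * τ) a = act σ (act τ a) := rfl

theorem act_order_aux (Λ ι : Type) : ∃ r : LinearOrder (Λ × (ι → ℝ)),
    ∀ (σ : ℝ ≃o ℝ) (a b : Λ × (ι → ℝ)), r.lt a b →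
      r.lt (a.1, fun t => σ (a.2 t)) (b.1, fun t => σ (b.2 t)) := by
  obtain ⟨i1, w1⟩ := exists_wellFoundedLT ι
  obtain ⟨i2, w2⟩ := exists_wellFoundedLT Λ
  let F : Λ × (ι → ℝ) → Λ ×ₗ (Lex (ι → ℝ)) := fun a => toLex (a.1, toLex a.2)
  have hF : Function.Injective F := fun a b h => h
  refine ⟨LinearOrder.lift' F hF, ?_⟩
  intro σ a b hab
  have hab : F a < F b := hab
  show F _ < F _
  rw [Prod.Lex.lt_iff] at hab ⊢
  rcases hab with h | ⟨h, i, h1, h2⟩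
  · exact Or.inl h
  · exact Or.inr ⟨h, i, fun j hj => congrArg σ (h1 j hj), σ.lt_iff_lt.2 h2⟩

theorem act_order (Λ : Type) : ∃ r : LinearOrder (Gam Λ),
    ∀ (σ : ℝ ≃o ℝ) (a b : Gam Λ), r.lt a b → r.lt (act σ a) (act σ b) := act_order_aux Λ ℝ

@[reducible] noncomputable def gamOrder (Λ : Type) : LinearOrder (Gam Λ) := (act_order Λ).choose

theorem act_strictMono {Λ : Type} (σ : ℝ ≃o ℝ) :
    letI := gamOrder Λ; StrictMono (act (Λ := Λ) σ) :=
  fun a b h => (act_order Λ).choose_spec σ a b h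

def sep {Λ : Type} (a b : Gam Λ) : Prop :=
  (∀ s t, a.2 s ≤ b.2 t) ∨ (∀ s t, b.2 s ≤ a.2 t)

theorem sep_act {Λ : Type} (σ : ℝ ≃o ℝ) {a b : Gam Λ} (h : sep a b) : sep (act σ a) (act σ b) := by
  rcases h with h | h
  · exact Or.inl fun s t => σ.le_iff_le.2 (h s t)
  · exact Or.inr fun s t => σ.le_iff_le.2 (h s t)

def swp {Λ : Type} (w w' : FreeMonoid (Gam Λ)) : Prop :=
  ∃ a b, sep a b ∧ w = FreeMonoid.of a * FreeMonoid.of b ∧ w' = FreeMonoid.of b * FreeMonoid.of a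

abbrev TM (Λ : Type) := (conGen (swp (Λ := Λ))).Quotient

def tm {Λ : Type} : FreeMonoid (Gam Λ) →* TM Λ := Con.mk' _

theorem tm_surj {Λ : Type} : Function.Surjective (tm (Λ := Λ)) := Con.mk'_surjective

theorem tm_eq {Λ : Type} {w w' : FreeMonoid (Gam Λ)} :
    tm w = tm w' ↔ ConGen.Rel swp w w' := Con.eq _

theorem rel_perm {Λ : Type} {w w' : FreeMonoid (Gam Λ)} (h : ConGen.Rel swp w w') :
    List.Perm w.toList w'.toList := by
  induction h with
  | of x y h =>
    obtain ⟨a, b, _, rfl, rfl⟩ := h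
    exact List.Perm.swap _ _ _
  | refl => exact List.Perm.refl _
  | symm _ ih => exact ih.symm
  | trans _ _ h1 h2 => exact h1.trans h2
  | mul _ _ h1 h2 => exact h1.append h2

def tact {Λ : Type} (σ : ℝ ≃o ℝ) : TM Λ →* TM Λ :=
  Con.lift _ (tm.comp (FreeMonoid.map (act σ))) (by
    rw [Con.conGen_le]
    rintro _ _ ⟨a, b, h, rfl, rfl⟩
    rw [Con.ker_rel, MonoidHom.comp_apply, MonoidHom.comp_apply, tm_eq]
    apply ConGen.Rel.of
    exact ⟨act σ a, act σ b, sep_act σ h, by simp, by simp⟩)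

theorem tact_tm {Λ : Type} (σ : ℝ ≃o ℝ) (w : FreeMonoid (Gam Λ)) :
    tact σ (tm w) = tm (FreeMonoid.map (act σ) w) := rfl

theorem fm_map_one {Λ : Type} (w : FreeMonoid (Gam Λ)) : FreeMonoid.map (act 1) w = w :=
  List.map_id w

theorem fm_map_mul {Λ : Type} (σ τ : ℝ ≃o ℝ) (w : FreeMonoid (Gam Λ)) :
    FreeMonoid.map (act (σ * τ)) w = FreeMonoid.map (act σ) (FreeMonoid.map (act τ) w) := by
  show FreeMonoid.map (act σ ∘ act τ) w = _
  rw [FreeMonoid.map_comp]; rfl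

theorem tact_one {Λ : Type} : tact (Λ := Λ) 1 = MonoidHom.id _ := by
  refine MonoidHom.ext fun m => ?_
  obtain ⟨w, rfl⟩ := tm_surj m
  rw [tact_tm, fm_map_one]; rfl

theorem tact_mul {Λ : Type} (σ τ : ℝ ≃o ℝ) :
    tact (Λ := Λ) (σ * τ) = (tact σ).comp (tact τ) := by
  refine MonoidHom.ext fun m => ?_
  obtain ⟨w, rfl⟩ := tm_surj m
  rw [tact_tm, fm_map_mul]; rfl

theorem tact_inv_apply {Λ : Type} (σ : ℝ ≃o ℝ) (m : TM Λ) : tact σ⁻¹ (tact σ m) = m := by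
  rw [← MonoidHom.comp_apply, ← tact_mul, inv_mul_cancel, tact_one]; rfl

theorem exists_nf {Λ : Type} (m : TM Λ) : letI := gamOrder Λ
    ∃ l : List (Gam Λ), IsLeast {l | tm (FreeMonoid.ofList l) = m} l := by
  let _ := gamOrder Λ
  obtain ⟨w, rfl⟩ := tm_surj m
  have hfin : {l : List (Gam Λ) | tm (FreeMonoid.ofList l) = tm w}.Finite := by
    apply Set.Finite.subset (List.finite_toSet (w.toList.permutations))
    intro l hl
    exact List.mem_permutations.2 (rel_perm (tm_eq.1 hl))
  obtain ⟨l, h1, h2⟩ := Set.exists_min_image _ id hfin ⟨w.toList, rfl⟩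
  exact ⟨l, h1, h2⟩

noncomputable def nf {Λ : Type} (m : TM Λ) : List (Gam Λ) := (exists_nf m).choose

theorem nf_spec {Λ : Type} (m : TM Λ) : letI := gamOrder Λ
    IsLeast {l | tm (FreeMonoid.ofList l) = m} (nf m) := (exists_nf m).choose_spec

theorem nf_inj {Λ : Type} : Function.Injective (nf (Λ := Λ)) := by
  intro m m' h
  letI := gamOrder Λ
  have h1 := (nf_spec m).1
  have h2 := (nf_spec m').1
  rw [Set.mem_ofPred_eq] at h1 h2
  rw [← h1, h, h2]

theorem map_lt {α : Type} [LinearOrder α] (f : α → α) (hf : StrictMono f) (l l' : List α)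
    (h : l < l') : l.map f < l'.map f := by
  induction l generalizing l' with
  | nil =>
    cases l' with
    | nil => exact absurd h (lt_irrefl _)
    | cons b l' => simp
  | cons a l ih =>
    cases l' with
    | nil => simp at h
    | cons b l' =>
      rw [List.map_cons, List.map_cons]
      rw [List.cons_lt_cons_iff] at h ⊢
      rcases h with h | ⟨rfl, h⟩
      · exact Or.inl (hf h)
      · exact Or.inr ⟨rfl, ih l' h⟩

theorem nf_tact {Λ : Type} (σ : ℝ ≃o ℝ) (m : TM Λ) : nf (tact σ m) = (nf m).map (act σ) := by
  letI := gamOrder Λ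
  refine (nf_spec (tact σ m)).unique ⟨?_, ?_⟩
  · have := (nf_spec m).1
    rw [Set.mem_ofPred_eq] at this ⊢
    rw [FreeMonoid.ofList_map, ← tact_tm, this]
  · intro l hl
    rw [Set.mem_ofPred_eq] at hl
    have h1 : tm (FreeMonoid.ofList (l.map (act σ⁻¹))) = m := by
      rw [FreeMonoid.ofList_map, ← tact_tm, hl, tact_inv_apply]
    have h2 := (nf_spec m).2 h1
    have h3 := (StrictMono.monotone (fun a b h => map_lt _ (act_strictMono σ) a b h) :
      Monotone (List.map (act σ))) h2
    have h4 : (l.map (act σ⁻¹)).map (act σ) = l := by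
      rw [List.map_map]
      convert List.map_id l
      ext1 a
      show act σ (act σ⁻¹ a) = a
      rw [← act_mul, mul_inv_cancel, act_one]
    rwa [h4] at h3

noncomputable instance tmOrder {Λ : Type} : LinearOrder (TM Λ) :=
  letI := gamOrder Λ
  LinearOrder.lift' nf nf_inj

theorem tact_lt {Λ : Type} (σ : ℝ ≃o ℝ) {m m' : TM Λ} (h : m < m') : tact σ m < tact σ m' := by
  letI := gamOrder Λ
  show nf (tact σ m) < nf (tact σ m')
  rw [nf_tact, nf_tact]
  exact map_lt _ (act_strictMono σ) _ _ h

end VFP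

namespace VFP

section lead
variable {A : Type} [Ring A]

/-- `w` has a leading coefficient satisfying `Q`. -/
def Lead (Q : A → Prop) (w : PowerSeries A) : Prop :=
  ∃ n, Q (PowerSeries.coeff n w) ∧ ∀ i < n, PowerSeries.coeff i w = 0

theorem coeff_mul_low (w c : PowerSeries A) (n : ℕ) (h : ∀ i < n, PowerSeries.coeff i w = 0)
    (hc : PowerSeries.constantCoeff c = 1) (k : ℕ) (hk : k ≤ n) :
    PowerSeries.coeff k (w * c) = PowerSeries.coeff k w := by
  rw [PowerSeries.coeff_mul, Finset.sum_eq_single (k, 0)]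
  · simp [hc]
  · rintro ⟨i, j⟩ hij hne
    have := Finset.HasAntidiagonal.mem_antidiagonal.1 hij
    simp only at this
    have hj : j ≠ 0 := fun h => hne (by subst h; simp at this; simp [this])
    simp [h i (by omega)]
  · intro h; exact absurd (Finset.HasAntidiagonal.mem_antidiagonal.2 (by simp)) h

theorem coeff_mul_low' (w c : PowerSeries A) (n : ℕ) (h : ∀ i < n, PowerSeries.coeff i w = 0)
    (hc : PowerSeries.constantCoeff c = 1) (k : ℕ) (hk : k ≤ n) :
    PowerSeries.coeff k (c * w) = PowerSeries.coeff k w := by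
  rw [PowerSeries.coeff_mul, Finset.sum_eq_single (0, k)]
  · simp [hc]
  · rintro ⟨i, j⟩ hij hne
    have := Finset.HasAntidiagonal.mem_antidiagonal.1 hij
    simp only at this
    have hj : i ≠ 0 := fun h => hne (by subst h; simp at this; simp [this])
    simp [h j (by omega)]
  · intro h; exact absurd (Finset.HasAntidiagonal.mem_antidiagonal.2 (by simp)) h

variable {Q : A → Prop}

theorem Lead.mul_right {w c : PowerSeries A} (h : Lead Q w)
    (hc : PowerSeries.constantCoeff c = 1) : Lead Q (w * c) := by
  obtain ⟨n, h1, h2⟩ := h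
  refine ⟨n, ?_, fun i hi => ?_⟩
  · rwa [coeff_mul_low w c n h2 hc n le_rfl]
  · rw [coeff_mul_low w c n h2 hc i hi.le, h2 i hi]

theorem Lead.mul_left {w c : PowerSeries A} (h : Lead Q w)
    (hc : PowerSeries.constantCoeff c = 1) : Lead Q (c * w) := by
  obtain ⟨n, h1, h2⟩ := h
  refine ⟨n, ?_, fun i hi => ?_⟩
  · rwa [coeff_mul_low' w c n h2 hc n le_rfl]
  · rw [coeff_mul_low' w c n h2 hc i hi.le, h2 i hi]

theorem Lead.add (hQ : ∀ a b, Q a → Q b → Q (a + b)) {w c : PowerSeries A} (h : Lead Q w)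
    (h' : Lead Q c) : Lead Q (w + c) := by
  obtain ⟨n, h1, h2⟩ := h
  obtain ⟨m, g1, g2⟩ := h'
  rcases lt_trichotomy n m with hlt | rfl | hlt
  · refine ⟨n, by rw [map_add, g2 n hlt, add_zero]; exact h1, fun i hi => ?_⟩
    rw [map_add, h2 i hi, g2 i (hi.trans hlt), add_zero]
  · exact ⟨n, by rw [map_add]; exact hQ _ _ h1 g1, fun i hi => by
      rw [map_add, h2 i hi, g2 i hi, add_zero]⟩
  · refine ⟨m, by rw [map_add, h2 m hlt, zero_add]; exact g1, fun i hi => ?_⟩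
    rw [map_add, g2 i hi, h2 i (hi.trans hlt), add_zero]

theorem Lead.zero (hQ : ¬ Q 0) : ¬ Lead Q (0 : PowerSeries A) := by
  rintro ⟨n, h1, _⟩
  exact hQ (by simpa using h1)

theorem Lead.tri (hQ : ∀ a, a = 0 ∨ Q a ∨ Q (-a)) (w : PowerSeries A) :
    w = 0 ∨ Lead Q w ∨ Lead Q (-w) := by
  by_cases h : w = 0
  · exact Or.inl h
  · right
    have hex : ∃ n, PowerSeries.coeff n w ≠ 0 := by
      by_contra hn
      push Not at hn
      exact h (PowerSeries.ext fun n => by simp [hn n])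
    classical
    have h1 := Nat.find_spec hex
    have h2 : ∀ i < Nat.find hex, PowerSeries.coeff i w = 0 := fun i hi => by
      by_contra hn
      exact Nat.find_min hex hi hn
    rcases hQ (PowerSeries.coeff (Nat.find hex) w) with h | h | h
    · exact absurd h h1
    · exact Or.inl ⟨_, h, h2⟩
    · exact Or.inr ⟨_, by rwa [map_neg], fun i hi => by rw [map_neg, h2 i hi, neg_zero]⟩

theorem cc_inv (u : (PowerSeries A)ˣ) (h : PowerSeries.constantCoeff (u : PowerSeries A) = 1) :
    PowerSeries.constantCoeff ((u⁻¹ : (PowerSeries A)ˣ) : PowerSeries A) = 1 := by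
  have := congrArg PowerSeries.constantCoeff u.mul_inv
  rwa [map_mul, h, one_mul, map_one] at this

/-- Positive units. -/
def PosU (Q : A → Prop) (u : (PowerSeries A)ˣ) : Prop := Lead Q ((u : PowerSeries A) - 1)

theorem PosU_one (hQ : ¬ Q 0) : ¬ PosU Q (1 : (PowerSeries A)ˣ) := by
  simpa [PosU] using Lead.zero hQ

theorem PosU.mul (hQ : ∀ a b, Q a → Q b → Q (a + b)) {u v : (PowerSeries A)ˣ} (hu : PosU Q u)
    (hv : PosU Q v) (h : PowerSeries.constantCoeff (v : PowerSeries A) = 1) : PosU Q (u * v) := by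
  have := (Lead.mul_right hu h).add hQ hv
  have e : (u * v - 1 : PowerSeries A) = (u - 1) * v + (v - 1) := by rw [sub_mul, one_mul]; abel
  rw [PosU, Units.val_mul, e]
  exact this

theorem PosU.conj {u c : (PowerSeries A)ˣ} (hu : PosU Q u)
    (h : PowerSeries.constantCoeff (c : PowerSeries A) = 1) : PosU Q (c * u * c⁻¹) := by
  have := Lead.mul_right (Lead.mul_left hu h) (cc_inv c h)
  have e : ((c * u * c⁻¹ : (PowerSeries A)ˣ) - 1 : PowerSeries A) =
      c * (u - 1) * (c⁻¹ : (PowerSeries A)ˣ) := by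
    rw [mul_sub, sub_mul]; simp
  rw [PosU, e]
  exact this

theorem PosU.tri (hQ : ∀ a, a = 0 ∨ Q a ∨ Q (-a)) (u : (PowerSeries A)ˣ)
    (h : PowerSeries.constantCoeff (u : PowerSeries A) = 1) :
    u = 1 ∨ PosU Q u ∨ PosU Q u⁻¹ := by
  rcases Lead.tri hQ ((u : PowerSeries A) - 1) with h1 | h1 | h1
  · left; ext1; exact sub_eq_zero.1 h1
  · exact Or.inr (Or.inl h1)
  · right; right
    have := Lead.mul_right h1 (cc_inv u h)
    have e : ((u⁻¹ : (PowerSeries A)ˣ) - 1 : PowerSeries A) =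
      -(u - 1) * (u⁻¹ : (PowerSeries A)ˣ) := by
      rw [neg_mul, sub_mul]; simp
    rw [PosU, e]
    exact this

/-- The unit `1 + a X`. -/
noncomputable def un (a : A) : (PowerSeries A)ˣ where
  val := 1 + PowerSeries.X * PowerSeries.C a
  inv := PowerSeries.mk fun n => (-a) ^ n
  val_inv := by
    ext n
    cases n with
    | zero => simp
    | succ n =>
      rw [add_mul, mul_assoc, map_add, PowerSeries.coeff_succ_X_mul]
      simp [PowerSeries.coeff_one, pow_succ']
  inv_val := by
    ext n
    cases n with
    | zero => simp
    | succ n =>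
      rw [mul_add, ← mul_assoc, map_add, (PowerSeries.commute_X _).eq, mul_assoc, PowerSeries.coeff_succ_X_mul]
      simp [PowerSeries.coeff_one, pow_succ]

theorem un_val (a : A) : (un a : PowerSeries A) = 1 + PowerSeries.X * PowerSeries.C a := rfl

theorem un_cc (a : A) : PowerSeries.constantCoeff (un a : PowerSeries A) = 1 := by
  simp [un_val]

theorem X_mul_C_mul (a b : A) : (PowerSeries.X * PowerSeries.C a) * (PowerSeries.X * PowerSeries.C b)
    = PowerSeries.X * PowerSeries.X * PowerSeries.C (a * b) := by
  rw [map_mul, mul_assoc, ← mul_assoc (PowerSeries.C a), (PowerSeries.commute_X _).eq]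
  simp only [mul_assoc]

theorem un_comm {a b : A} (h : a * b = b * a) : un a * un b = un b * un a := by
  ext1
  simp only [Units.val_mul, un_val, mul_add, add_mul, X_mul_C_mul, h, one_mul, mul_one]
  abel

theorem one_add_zpow (w : Aˣ) (a : A) (h : a * a = 0) (hw : (w : A) = 1 + a) (e : ℤ) :
    ((w ^ e : Aˣ) : A) = 1 + e • a := by
  have hi : ((w⁻¹ : Aˣ) : A) = 1 - a := by
    have e : (1 - a) * (w : A) = 1 := by simp [hw, sub_mul, mul_add, h]
    calc ((w⁻¹ : Aˣ) : A) = ((1 - a) * (w : A)) * ((w⁻¹ : Aˣ) : A) := by rw [e, one_mul]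
      _ = 1 - a := by rw [mul_assoc, w.mul_inv, mul_one]
  induction e with
  | zero => simp
  | succ n ih =>
    rw [zpow_add_one, Units.val_mul, ih, hw]
    rw [mul_add, mul_one, add_mul, one_mul, smul_mul_assoc, h, smul_zero, add_zero, add_smul,
      one_smul, add_assoc]
  | pred n ih =>
    rw [zpow_sub_one, Units.val_mul, ih, hi]
    rw [mul_sub, mul_one, add_mul, one_mul, smul_mul_assoc, h, smul_zero, add_zero, sub_smul,
      one_smul, add_sub_assoc]

theorem top_coeff (L : List (A × ℤ)) :
    PowerSeries.coeff L.length (L.map fun s => (1 + s.2 • (PowerSeries.X * PowerSeries.C s.1) :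
      PowerSeries A)).prod = (L.map Prod.snd).prod • (L.map Prod.fst).prod ∧
    ∀ k > L.length, PowerSeries.coeff k (L.map fun s =>
      (1 + s.2 • (PowerSeries.X * PowerSeries.C s.1) : PowerSeries A)).prod = 0 := by
  induction L with
  | nil =>
    refine ⟨by simp, fun k hk => ?_⟩
    simp at hk
    simp [PowerSeries.coeff_one]; omega
  | cons s L ih =>
    obtain ⟨h1, h2⟩ := ih
    have key : ∀ k, PowerSeries.coeff (k + 1) (((s :: L).map fun s =>
      (1 + s.2 • (PowerSeries.X * PowerSeries.C s.1) : PowerSeries A)).prod) =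
      PowerSeries.coeff (k + 1) ((L.map fun s =>
      (1 + s.2 • (PowerSeries.X * PowerSeries.C s.1) : PowerSeries A)).prod) +
      s.2 • (s.1 * PowerSeries.coeff k ((L.map fun s =>
      (1 + s.2 • (PowerSeries.X * PowerSeries.C s.1) : PowerSeries A)).prod)) := by
      intro k
      rw [List.map_cons, List.prod_cons, add_mul, one_mul, map_add, smul_mul_assoc, map_zsmul,
        mul_assoc, PowerSeries.coeff_succ_X_mul, PowerSeries.coeff_C_mul]
    constructor
    · rw [List.length_cons, key, h1, h2 _ (by omega), zero_add]
      rw [List.map_cons, List.map_cons, List.prod_cons, List.prod_cons, mul_smul_comm, mul_smul]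
    · intro k hk
      rw [List.length_cons] at hk
      obtain ⟨k, rfl⟩ : ∃ j, k = j + 1 := ⟨k - 1, by omega⟩
      rw [key, h2 _ (by omega), h2 _ (by omega)]
      simp

end lead
end VFP

namespace VFP

section ring
variable {Λ : Type}

abbrev TA (Λ : Type) := MonoidAlgebra ℤ (TM Λ)

def PosA (r : TA Λ) : Prop := ∃ m, 0 < r.coeff m ∧ ∀ m' < m, r.coeff m' = 0

theorem PosA_zero : ¬ PosA (0 : TA Λ) := by
  rintro ⟨m, h, _⟩
  simp at h

theorem PosA_add (r s : TA Λ) (hr : PosA r) (hs : PosA s) : PosA (r + s) := by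
  obtain ⟨n, h1, h2⟩ := hr
  obtain ⟨m, g1, g2⟩ := hs
  rcases lt_trichotomy n m with hlt | rfl | hlt
  · refine ⟨n, ?_, fun i hi => ?_⟩
    · simpa [g2 n hlt] using h1
    · simp [h2 i hi, g2 i (hi.trans hlt)]
  · refine ⟨n, ?_, fun i hi => ?_⟩
    · simpa using add_pos h1 g1
    · simp [h2 i hi, g2 i hi]
  · refine ⟨m, ?_, fun i hi => ?_⟩
    · simpa [h2 m hlt] using g1
    · simp [g2 i hi, h2 i (hi.trans hlt)]

theorem PosA_tri (r : TA Λ) : r = 0 ∨ PosA r ∨ PosA (-r) := by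
  by_cases h : r = 0
  · exact Or.inl h
  · right
    have hne : r.coeff.support.Nonempty := by
      rw [Finsupp.support_nonempty_iff]
      exact fun h' => h (MonoidAlgebra.coeff_eq_zero.1 h')
    obtain ⟨m, hm, hmin⟩ := Finset.exists_min_image _ id hne
    have h0 : ∀ m' < m, r.coeff m' = 0 := fun m' hlt => by
      by_contra hn
      exact absurd (hmin m' (Finsupp.mem_support_iff.2 hn)) (not_le.2 hlt)
    rcases lt_or_gt_of_ne (Finsupp.mem_support_iff.1 hm) with h | h
    · right
      exact ⟨m, by simpa using h, fun m' hm' => by simp [h0 m' hm']⟩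
    · exact Or.inl ⟨m, h, h0⟩

noncomputable def aact (σ : ℝ ≃o ℝ) : TA Λ →+* TA Λ :=
  MonoidAlgebra.mapDomainRingHom ℤ (tact σ)

theorem aact_one : aact (Λ := Λ) 1 = RingHom.id _ := by
  rw [aact, tact_one, MonoidAlgebra.mapDomainRingHom_id]

theorem aact_mul (σ τ : ℝ ≃o ℝ) : aact (Λ := Λ) (σ * τ) = (aact σ).comp (aact τ) := by
  rw [aact, tact_mul, MonoidAlgebra.mapDomainRingHom_comp]; rfl

theorem tact_inj (σ : ℝ ≃o ℝ) : Function.Injective (tact (Λ := Λ) σ) :=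
  Function.LeftInverse.injective (tact_inv_apply σ)

theorem tact_apply_inv (σ : ℝ ≃o ℝ) (m : TM Λ) : tact σ (tact σ⁻¹ m) = m := by
  have := tact_inv_apply σ⁻¹ m
  rwa [inv_inv] at this

theorem aact_coeff (σ : ℝ ≃o ℝ) (r : TA Λ) (m : TM Λ) :
    (aact σ r).coeff m = r.coeff (tact σ⁻¹ m) := by
  have : (aact σ r).coeff = Finsupp.mapDomain (tact σ) r.coeff := rfl
  rw [this]
  conv_lhs => rw [← tact_apply_inv σ m]
  exact Finsupp.mapDomain_apply (tact_inj σ) _ _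

theorem PosA_aact (σ : ℝ ≃o ℝ) (r : TA Λ) (h : PosA r) : PosA (aact σ r) := by
  obtain ⟨m, h1, h2⟩ := h
  refine ⟨tact σ m, ?_, fun m' hm' => ?_⟩
  · rwa [aact_coeff, tact_inv_apply]
  · rw [aact_coeff]
    apply h2
    have := tact_lt σ⁻¹ hm'
    rwa [tact_inv_apply] at this

noncomputable def pact (σ : ℝ ≃o ℝ) : PowerSeries (TA Λ) →+* PowerSeries (TA Λ) :=
  PowerSeries.map (aact σ)

theorem pact_one : pact (Λ := Λ) 1 = RingHom.id _ := by
  rw [pact, aact_one]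
  ext f n
  simp

theorem pact_mul (σ τ : ℝ ≃o ℝ) : pact (Λ := Λ) (σ * τ) = (pact σ).comp (pact τ) := by
  rw [pact, aact_mul]
  refine RingHom.ext fun f => PowerSeries.ext fun n => ?_
  simp [pact]

abbrev UU (Λ : Type) := (PowerSeries (TA Λ))ˣ

noncomputable def uact : (ℝ ≃o ℝ) →* MulAut (UU Λ) where
  toFun σ :=
    { toFun := Units.map (pact (Λ := Λ) σ).toMonoidHom
      invFun := Units.map (pact (Λ := Λ) σ⁻¹).toMonoidHom
      left_inv := fun u => by
        ext1
        show pact σ⁻¹ (pact σ (u : PowerSeries (TA Λ))) = u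
        rw [← RingHom.comp_apply, ← pact_mul, inv_mul_cancel, pact_one]; rfl
      right_inv := fun u => by
        ext1
        show pact σ (pact σ⁻¹ (u : PowerSeries (TA Λ))) = u
        rw [← RingHom.comp_apply, ← pact_mul, mul_inv_cancel, pact_one]; rfl
      map_mul' := map_mul _ }
  map_one' := by
    ext1 u
    ext1
    show pact 1 (u : PowerSeries (TA Λ)) = u
    rw [pact_one]; rfl
  map_mul' σ τ := by
    ext1 u
    ext1
    show pact (σ * τ) (u : PowerSeries (TA Λ)) = pact σ (pact τ u)
    rw [pact_mul]; rfl

theorem uact_val (σ : ℝ ≃o ℝ) (u : UU Λ) :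
    ((uact σ u : UU Λ) : PowerSeries (TA Λ)) = pact σ u := rfl

theorem uact_cc (σ : ℝ ≃o ℝ) (u : UU Λ)
    (h : PowerSeries.constantCoeff (u : PowerSeries (TA Λ)) = 1) :
    PowerSeries.constantCoeff ((uact σ u : UU Λ) : PowerSeries (TA Λ)) = 1 := by
  have := congrArg (aact σ) h
  rw [map_one] at this
  rw [uact_val, ← this, pact, ← PowerSeries.coeff_zero_eq_constantCoeff_apply,
    ← PowerSeries.coeff_zero_eq_constantCoeff_apply, PowerSeries.coeff_map]

theorem PosU_uact (σ : ℝ ≃o ℝ) (u : UU Λ) (h : PosU PosA u) : PosU PosA (uact σ u) := by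
  obtain ⟨n, h1, h2⟩ := h
  have e : ((uact σ u : UU Λ) : PowerSeries (TA Λ)) - 1 = pact σ ((u : PowerSeries (TA Λ)) - 1) := by
    rw [uact_val, map_sub, map_one]
  refine ⟨n, ?_, fun i hi => ?_⟩
  · rw [e, pact, PowerSeries.coeff_map]
    exact PosA_aact σ _ h1
  · rw [e, pact, PowerSeries.coeff_map, h2 i hi, map_zero]

noncomputable def lt (a : Gam Λ) : TA Λ := MonoidAlgebra.single (tm (FreeMonoid.of a)) 1

noncomputable def ul (a : Gam Λ) : UU Λ := un (lt a)

theorem lt_comm {a b : Gam Λ} (h : sep a b) : lt a * lt b = lt b * lt a := by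
  rw [lt, lt, MonoidAlgebra.single_mul_single, MonoidAlgebra.single_mul_single, ← map_mul,
    ← map_mul]
  congr 1
  exact tm_eq.2 (ConGen.Rel.of _ _ ⟨a, b, h, rfl, rfl⟩)

theorem aact_lt (σ : ℝ ≃o ℝ) (a : Gam Λ) : aact σ (lt a) = lt (act σ a) := by
  simp [aact, lt, tact_tm]

theorem uact_ul (σ : ℝ ≃o ℝ) (a : Gam Λ) : uact σ (ul a) = ul (act σ a) := by
  ext1
  rw [uact_val, ul, ul, un_val, un_val, ← aact_lt]
  simp [pact]

abbrev TT (Λ : Type) := SemidirectProduct (UU Λ) (ℝ ≃o ℝ) uact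

def NiceT (t : TT Λ) : Prop :=
  RA t.right ∧ PowerSeries.constantCoeff (t.left : PowerSeries (TA Λ)) = 1

theorem NiceT_one : NiceT (1 : TT Λ) := ⟨RA_one, by simp⟩

theorem NiceT_mul {s t : TT Λ} (hs : NiceT s) (ht : NiceT t) : NiceT (s * t) := by
  refine ⟨RA_mul _ _ hs.1 ht.1, ?_⟩
  rw [SemidirectProduct.mul_left, Units.val_mul, map_mul, hs.2, uact_cc _ _ ht.2, one_mul]

theorem NiceT_inv {s : TT Λ} (hs : NiceT s) : NiceT s⁻¹ := by
  refine ⟨RA_inv _ hs.1, ?_⟩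
  rw [SemidirectProduct.inv_left]
  exact uact_cc _ _ (cc_inv _ hs.2)

def PT (t : TT Λ) : Prop := PF t.right ∨ (t.right = 1 ∧ PosU PosA t.left)

theorem PT_one : ¬ PT (1 : TT Λ) := by
  rintro (h | h)
  · exact PF_one h
  · exact PosU_one PosA_zero h.2

theorem PT_mul {s t : TT Λ} (hs : PT s) (ht : PT t) (hn : NiceT t) : PT (s * t) := by
  rcases hs with hs | ⟨hs, hs'⟩ <;> rcases ht with ht | ⟨ht, ht'⟩
  · exact Or.inl (PF_mul _ _ hs ht)
  · left
    rwa [SemidirectProduct.mul_right, ht, mul_one]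
  · left
    rwa [SemidirectProduct.mul_right, hs, one_mul]
  · right
    refine ⟨by rw [SemidirectProduct.mul_right, hs, ht, one_mul], ?_⟩
    rw [SemidirectProduct.mul_left]
    exact hs'.mul PosA_add (PosU_uact _ _ ht') (uact_cc _ _ hn.2)

theorem PT_conj {g t : TT Λ} (ht : PT t) (hn : NiceT g) : PT (g * t * g⁻¹) := by
  rcases ht with ht | ⟨ht, ht'⟩
  · exact Or.inl (PF_conj _ _ ht)
  · right
    refine ⟨by simp [ht], ?_⟩
    have : (g * t * g⁻¹).left = g.left * uact g.right t.left * g.left⁻¹ := by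
      rw [SemidirectProduct.mul_left, SemidirectProduct.mul_left, SemidirectProduct.inv_left,
        SemidirectProduct.mul_right, ht, mul_one, ← MulAut.mul_apply, ← map_mul, mul_inv_cancel,
        map_one, MulAut.one_apply]
    rw [this]
    exact (PosU_uact _ _ ht').conj hn.2

theorem PT_tri {t : TT Λ} (hn : NiceT t) : t = 1 ∨ PT t ∨ PT t⁻¹ := by
  rcases RA_tri _ hn.1 with h | h | h
  · rcases PosU.tri PosA_tri _ hn.2 with h' | h' | h'
    · exact Or.inl (SemidirectProduct.ext h' h)
    · exact Or.inr (Or.inl (Or.inr ⟨h, h'⟩))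
    · refine Or.inr (Or.inr (Or.inr ⟨by simp [h], ?_⟩))
      rw [SemidirectProduct.inv_left, h, inv_one, map_one]
      exact h'
  · exact Or.inr (Or.inl (Or.inl h))
  · exact Or.inr (Or.inr (Or.inl h))

end ring

section sq
variable {Λ : Type}

def Sq (m : TM Λ) : Prop :=
  ∃ (p q : TM Λ) (a : Gam Λ), m = p * tm (FreeMonoid.of a) * tm (FreeMonoid.of a) * q

theorem Sq.left {m : TM Λ} (h : Sq m) (n : TM Λ) : Sq (n * m) := by
  obtain ⟨p, q, a, rfl⟩ := h
  exact ⟨n * p, q, a, by simp only [mul_assoc]⟩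

theorem Sq.right {m : TM Λ} (h : Sq m) (n : TM Λ) : Sq (m * n) := by
  obtain ⟨p, q, a, rfl⟩ := h
  exact ⟨p, q * n, a, by simp only [mul_assoc]⟩

noncomputable def sqI (Λ : Type) : TwoSidedIdeal (TA Λ) :=
  TwoSidedIdeal.mk' {r | ∀ m, ¬ Sq m → r.coeff m = 0}
    (fun m _ => by simp)
    (fun {x y} hx hy m hm => by simp [hx m hm, hy m hm])
    (fun {x} hx m hm => by simp [hx m hm])
    (fun {x y} hy m hm => by
      classical
      rw [MonoidAlgebra.coeff_mul]
      refine Finset.sum_eq_zero fun a _ => Finset.sum_eq_zero fun b _ => ?_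
      simp only
      split_ifs with h
      · rw [hy b (fun hb => hm (h ▸ hb.left a)), mul_zero]
      · rfl)
    (fun {x y} hx m hm => by
      classical
      rw [MonoidAlgebra.coeff_mul]
      refine Finset.sum_eq_zero fun a _ => Finset.sum_eq_zero fun b _ => ?_
      simp only
      split_ifs with h
      · rw [hx a (fun ha => hm (h ▸ ha.right b)), zero_mul]
      · rfl)

abbrev QA (Λ : Type) := (sqI Λ).ringCon.Quotient

noncomputable def qa (Λ : Type) : TA Λ →+* QA Λ := (sqI Λ).ringCon.mk'

theorem qa_zero (r : TA Λ) : qa Λ r = 0 ↔ ∀ m, ¬ Sq m → r.coeff m = 0 := by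
  have h1 : qa Λ r = 0 ↔ r ∈ sqI Λ := by
    rw [TwoSidedIdeal.mem_iff, ← map_zero (qa Λ)]
    exact RingCon.eq _
  rw [h1]
  exact TwoSidedIdeal.mem_mk' _ _ _ _ _ _ r

theorem qa_lt_sq (a : Gam Λ) : qa Λ (lt a) * qa Λ (lt a) = 0 := by
  rw [← map_mul, qa_zero, lt, MonoidAlgebra.single_mul_single]
  intro m hm
  rw [MonoidAlgebra.coeff_single, Finsupp.single_apply, if_neg]
  rintro rfl
  exact hm ⟨1, 1, a, by simp⟩

theorem ul_zpow (a : Gam Λ) (e : ℤ) :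
    PowerSeries.map (qa Λ) ((ul a ^ e : UU Λ) : PowerSeries (TA Λ)) =
    1 + e • (PowerSeries.X * PowerSeries.C (qa Λ (lt a))) := by
  have := one_add_zpow (Units.map ((PowerSeries.map (qa Λ) :
    PowerSeries (TA Λ) →+* PowerSeries (QA Λ)) : PowerSeries (TA Λ) →* PowerSeries (QA Λ)) (ul a))
    (PowerSeries.X * PowerSeries.C (qa Λ (lt a)))
    (by rw [X_mul_C_mul, qa_lt_sq, map_zero, mul_zero])
    (by
      show PowerSeries.map (qa Λ) ((ul a : UU Λ) : PowerSeries (TA Λ)) = _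
      rw [ul, un_val]; simp) e
  rw [← this, ← map_zpow]
  rfl

theorem lt_prod (L : List (Gam Λ × ℤ)) : (L.map fun s => lt s.1).prod =
    MonoidAlgebra.single (tm (FreeMonoid.ofList (L.map Prod.fst))) 1 := by
  induction L with
  | nil => rfl
  | cons s L ih =>
    rw [List.map_cons, List.prod_cons, ih, lt, MonoidAlgebra.single_mul_single, ← map_mul]
    simp

theorem ul_prod_ne (L : List (Gam Λ × ℤ)) (hL : L ≠ []) (he : ∀ s ∈ L, s.2 ≠ 0)
    (hs : ¬ Sq (tm (FreeMonoid.ofList (L.map Prod.fst)))) :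
    (L.map fun s => ul s.1 ^ s.2).prod ≠ 1 := by
  intro hp
  have h := congrArg (fun u : UU Λ => PowerSeries.coeff L.length
    (PowerSeries.map (qa Λ) (u : PowerSeries (TA Λ)))) hp
  simp only [Units.val_one, map_one] at h
  have e1 : PowerSeries.map (qa Λ) (((L.map fun s => ul s.1 ^ s.2).prod : UU Λ) :
      PowerSeries (TA Λ)) = ((L.map fun s => (qa Λ (lt s.1), s.2)).map
        fun s => (1 + s.2 • (PowerSeries.X * PowerSeries.C s.1) : PowerSeries (QA Λ))).prod := by
    clear h hp hs he hL
    induction L with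
    | nil => simp
    | cons s L ih =>
      simp only [List.map_cons, List.prod_cons, Units.val_mul, map_mul, ih, ul_zpow]
  have h2 := (top_coeff (L.map fun s => (qa Λ (lt s.1), s.2))).1
  rw [← e1, List.length_map, h] at h2
  have hlen : L.length ≠ 0 := fun h => hL (List.length_eq_zero_iff.1 h)
  rw [PowerSeries.coeff_one, if_neg hlen, List.map_map, List.map_map] at h2
  have h3 : (L.map (Prod.fst ∘ fun s => (qa Λ (lt s.1), s.2))).prod =
      qa Λ (L.map fun s => lt s.1).prod := by
    rw [map_list_prod, List.map_map]; rfl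
  rw [h3, ← map_zsmul, lt_prod, eq_comm, qa_zero] at h2
  have h4 := h2 _ hs
  rw [MonoidAlgebra.coeff_smul_apply, MonoidAlgebra.coeff_single, Finsupp.single_eq_same] at h4
  simp only [smul_eq_mul, mul_one] at h4
  rw [List.prod_eq_zero_iff] at h4
  obtain ⟨s, hs1, hs2⟩ := List.mem_map.1 h4
  exact he s hs1 hs2

end sq
end VFP

namespace VFP
section
variable {R J : Type}

theorem om_inl_le (r : R) (k : ℕ) (t : ℝ) : om (J := J) (Sum.inl r) k t ≤ k + 1 := by
  simp [om]

noncomputable def ltr (y : R ⊕ J) (k : ℕ) : Gam (R ⊕ J) := (y, om y k)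

theorem inr_inl (σ : ℝ ≃o ℝ) (u : UU (R ⊕ J)) :
    (SemidirectProduct.inr σ * SemidirectProduct.inl u : TT (R ⊕ J)) =
      SemidirectProduct.inl (uact σ u) * SemidirectProduct.inr σ := by
  rw [SemidirectProduct.inl_aut, mul_assoc, ← map_mul, inv_mul_cancel, map_one, mul_one]

theorem act_xi_shift (y : R ⊕ J) {k n : ℕ} (h : k < n) :
    act (xi k)⁻¹ (ltr y (n + 1)) = ltr y n := by
  have : act (xi k) (ltr y n) = ltr y (n + 1) := by
    refine Prod.ext rfl ?_
    funext t
    show xi k (om y n t) = om y (n + 1) t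
    rw [om_succ, xi_of_ge]
    have h1 := om_ge y n t
    have h2 : (k : ℝ) + 1 ≤ n := by exact_mod_cast h
    linarith
  rw [← this, ← act_mul, inv_mul_cancel, act_one]

theorem act_xi_fix (r : R) {k n : ℕ} (h : k < n) :
    act (xi n)⁻¹ (ltr (J := J) (Sum.inl r) k) = ltr (Sum.inl r) k := by
  have : act (xi n) (ltr (J := J) (Sum.inl r) k) = ltr (Sum.inl r) k := by
    refine Prod.ext rfl ?_
    funext t
    show xi n (om (J := J) (Sum.inl r) k t) = om (J := J) (Sum.inl r) k t
    rw [xi_of_le]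
    have h1 := om_inl_le (J := J) r k t
    have h2 : (k : ℝ) + 1 ≤ n := by exact_mod_cast h
    linarith
  conv_lhs => rw [← this]
  rw [← act_mul, inv_mul_cancel, act_one]

noncomputable def Psi : Bgrp R J →* TT (R ⊕ J) :=
  Blift (fun y n => match y with
    | none => SemidirectProduct.inr (xi n)⁻¹
    | some y => SemidirectProduct.inl (ul (ltr y n))) (by
    intro y n k hk
    cases y with
    | none =>
      simp only
      rw [← map_mul, ← map_mul, ← mul_inv_rev, ← mul_inv_rev, xi_rel hk]
    | some y =>
      simp only
      rw [inr_inl, uact_ul, act_xi_shift y hk]) (by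
    intro y r n k hk
    cases y with
    | none =>
      simp only
      rw [inr_inl, uact_ul, act_xi_fix r hk]
    | some y =>
      simp only
      rw [← map_mul, ← map_mul, ul, ul, un_comm]
      apply lt_comm
      right
      intro s t
      have h1 := om_inl_le (J := J) r k s
      have h2 : (k : ℝ) + 1 ≤ n := by exact_mod_cast hk
      have h3 := om_ge y n t
      show om (J := J) (Sum.inl r) k s ≤ om y n t
      linarith)

theorem Psi_x (n : ℕ) : Psi (Y none n : Bgrp R J) = SemidirectProduct.inr (xi n)⁻¹ := Blift_Y ..
theorem Psi_some (y : R ⊕ J) (n : ℕ) : Psi (Y (some y) n) =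
    SemidirectProduct.inl (ul (ltr y n)) := Blift_Y ..

theorem gen_closure : Subgroup.closure (Set.range fun p : BGen R J => Y p.1 p.2) = ⊤ :=
  PresentedGroup.closure_range_of _

theorem Psi_right (g : Bgrp R J) : (Psi g).right = rho g := by
  have : (SemidirectProduct.rightHom.comp Psi : Bgrp R J →* (ℝ ≃o ℝ)) = rho := by
    refine PresentedGroup.ext ?_
    rintro ⟨y | y, n⟩
    · show (Psi (Y none n)).right = rho (Y none n)
      rw [Psi_x, rho_x]; rfl
    · show (Psi (Y (some y) n)).right = rho (Y (some y) n)
      rw [Psi_some, rho_some]; rfl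
  exact DFunLike.congr_fun this g

theorem Psi_nice (g : Bgrp R J) : NiceT (Psi g) := by
  have hg : g ∈ Subgroup.closure (Set.range fun p : BGen R J => Y p.1 p.2) := by
    rw [gen_closure]; trivial
  induction hg using Subgroup.closure_induction with
  | mem x hx =>
    obtain ⟨⟨y | y, n⟩, rfl⟩ := hx
    · show NiceT (Psi (Y none n))
      rw [Psi_x]
      exact ⟨RA_inv _ (RA_xi n), by simp⟩
    · show NiceT (Psi (Y (some y) n))
      rw [Psi_some]
      exact ⟨RA_one, un_cc _⟩
  | one => rw [map_one]; exact NiceT_one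
  | mul x y _ _ hx hy => rw [map_mul]; exact NiceT_mul hx hy
  | inv x _ hx => rw [map_inv]; exact NiceT_inv hx

theorem Psi_F (f : Bgrp R J) (hf : f ∈ Fsub R J) : Psi f = SemidirectProduct.inr (rho f) := by
  induction hf using Subgroup.closure_induction with
  | mem x hx =>
    obtain ⟨n, rfl⟩ := hx
    rw [Psi_x, rho_x]
  | one => simp
  | mul x y _ _ hx hy => rw [map_mul, map_mul, map_mul, hx, hy]
  | inv x _ hx => rw [map_inv, map_inv, map_inv, hx]

structure Syl (R J : Type) where
  y : R ⊕ J
  k : ℕ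
  f : Bgrp R J
  hf : f ∈ Fsub R J
  e : ℤ

noncomputable def Syl.base (s : Syl R J) : Bgrp R J := s.f * Y (some s.y) s.k * s.f⁻¹
noncomputable def Syl.val (s : Syl R J) : Bgrp R J := s.base ^ s.e
noncomputable def Syl.let (s : Syl R J) : Gam (R ⊕ J) := act (rho s.f) (ltr s.y s.k)

def Syl.shift (s : Syl R J) (h : Bgrp R J) (hh : h ∈ Fsub R J) : Syl R J :=
  ⟨s.y, s.k, h * s.f, mul_mem hh s.hf, s.e⟩

theorem Syl.shift_val (s : Syl R J) (h : Bgrp R J) (hh : h ∈ Fsub R J) :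
    (s.shift h hh).val = h * s.val * h⁻¹ := by
  rw [Syl.val, Syl.val, ← conj_zpow]
  congr 1
  simp only [Syl.base, Syl.shift]
  group

theorem Psi_val (s : Syl R J) : Psi s.val = SemidirectProduct.inl (ul s.let ^ s.e) := by
  rw [Syl.val, map_zpow, Syl.base, map_mul, map_mul, map_inv, Psi_F _ s.hf, Psi_some, ← map_inv,
    ← SemidirectProduct.inl_aut, uact_ul, ← map_zpow, Syl.let]

theorem base_eq {s s' : Syl R J} (h : s.let = s'.let) : s.base = s'.base := by
  obtain ⟨y, k, f, hf, e⟩ := s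
  obtain ⟨y', k', f', hf', e'⟩ := s'
  have h1 : y = y' := congrArg Prod.fst h
  subst h1
  exact letter_eq y k k' f f' hf hf' (fun t => congrFun (congrArg Prod.snd h) t)

theorem base_comm {s s' : Syl R J} (h : sep s.let s'.let) : Commute s.base s'.base := by
  obtain ⟨y, k, f, hf, e⟩ := s
  obtain ⟨y', k', f', hf', e'⟩ := s'
  rcases h with h | h
  · exact letter_comm y y' k k' f f' hf hf' h
  · exact (letter_comm y' y k' k f' f hf' hf h).symm

noncomputable def sprod (L : List (Syl R J)) : Bgrp R J := (L.map Syl.val).prod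

theorem sprod_append (L L' : List (Syl R J)) : sprod (L ++ L') = sprod L * sprod L' := by
  simp [sprod]

theorem exists_repr (g : Bgrp R J) : ∃ (L : List (Syl R J)) (f : Bgrp R J), f ∈ Fsub R J ∧
    g = sprod L * f := by
  have hsh : ∀ (L : List (Syl R J)) (h : Bgrp R J), h ∈ Fsub R J →
      ∃ L', h * sprod L = sprod L' * h := by
    intro L h hh
    refine ⟨L.map fun s => s.shift h hh, ?_⟩
    induction L with
    | nil => simp [sprod]
    | cons s L ih =>
      simp only [sprod, List.map_cons, List.prod_cons, Syl.shift_val] at ih ⊢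
      rw [mul_assoc _ _ h, ← ih]
      group
  have hg : g ∈ Subgroup.closure (Set.range fun p : BGen R J => Y p.1 p.2) := by
    rw [gen_closure]; trivial
  induction hg using Subgroup.closure_induction_left with
  | one => exact ⟨[], 1, one_mem _, by simp [sprod]⟩
  | mul_left x hx y _ ih =>
    obtain ⟨L, f, hf, rfl⟩ := ih
    obtain ⟨⟨z | z, n⟩, rfl⟩ := hx
    · have hm : (Y none n : Bgrp R J) ∈ Fsub R J := Subgroup.subset_closure ⟨n, rfl⟩
      obtain ⟨L', e⟩ := hsh L _ hm
      refine ⟨L', Y none n * f, mul_mem hm hf, ?_⟩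
      show Y none n * _ = _
      rw [← mul_assoc, e, mul_assoc]
    · refine ⟨⟨z, n, 1, one_mem _, 1⟩ :: L, f, hf, ?_⟩
      show Y (some z) n * _ = _
      simp [sprod, Syl.val, Syl.base, mul_assoc]
  | inv_mul_cancel x hx y _ ih =>
    obtain ⟨L, f, hf, rfl⟩ := ih
    obtain ⟨⟨z | z, n⟩, rfl⟩ := hx
    · have hm : (Y none n : Bgrp R J)⁻¹ ∈ Fsub R J := inv_mem (Subgroup.subset_closure ⟨n, rfl⟩)
      obtain ⟨L', e⟩ := hsh L _ hm
      refine ⟨L', (Y none n)⁻¹ * f, mul_mem hm hf, ?_⟩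
      show (Y none n)⁻¹ * _ = _
      rw [← mul_assoc, e, mul_assoc]
    · refine ⟨⟨z, n, 1, one_mem _, -1⟩ :: L, f, hf, ?_⟩
      show (Y (some z) n)⁻¹ * _ = _
      simp [sprod, Syl.val, Syl.base, mul_assoc]

def Reach (w w' : List (Gam (R ⊕ J))) : Prop := ∀ L : List (Syl R J), L.map Syl.let = w →
  ∃ L' : List (Syl R J), L'.map Syl.let = w' ∧ sprod L' = sprod L

theorem reach_swap {a b : Gam (R ⊕ J)} (h : sep a b) : Reach (R := R) (J := J) [a, b] [b, a] := by
  intro L hL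
  match L, hL with
  | [s, s'], hL =>
    simp only [List.map_cons, List.map_nil, List.cons.injEq, and_true] at hL
    refine ⟨[s', s], by simp [hL], ?_⟩
    have := base_comm (s := s) (s' := s') (by rw [hL.1, hL.2]; exact h)
    have := (this.zpow_zpow s.e s'.e).eq
    simp [sprod, Syl.val, this]

theorem reach_append {w1 w2 v1 v2 : List (Gam (R ⊕ J))} (h1 : Reach (R := R) (J := J) w1 v1)
    (h2 : Reach (R := R) (J := J) w2 v2) : Reach (R := R) (J := J) (w1 ++ w2) (v1 ++ v2) := by
  intro L hL
  obtain ⟨L1, L2, rfl, e1, e2⟩ := List.map_eq_append_iff.1 hL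
  obtain ⟨L1', g1, k1⟩ := h1 L1 e1
  obtain ⟨L2', g2, k2⟩ := h2 L2 e2
  exact ⟨L1' ++ L2', by simp [g1, g2], by rw [sprod_append, sprod_append, k1, k2]⟩

theorem reach_trans {w1 w2 w3 : List (Gam (R ⊕ J))} (h1 : Reach (R := R) (J := J) w1 w2)
    (h2 : Reach (R := R) (J := J) w2 w3) : Reach (R := R) (J := J) w1 w3 := by
  intro L hL
  obtain ⟨L1, g1, k1⟩ := h1 L hL
  obtain ⟨L2, g2, k2⟩ := h2 L1 g1
  exact ⟨L2, g2, k2.trans k1⟩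

theorem reach_of_rel {w w' : FreeMonoid (Gam (R ⊕ J))} (h : ConGen.Rel swp w w') :
    Reach (R := R) (J := J) w.toList w'.toList ∧ Reach (R := R) (J := J) w'.toList w.toList := by
  induction h with
  | of x y h =>
    obtain ⟨a, b, hs, rfl, rfl⟩ := h
    exact ⟨reach_swap hs, reach_swap hs.symm⟩
  | refl => exact ⟨fun L h => ⟨L, h, rfl⟩, fun L h => ⟨L, h, rfl⟩⟩
  | symm _ ih => exact ih.symm
  | trans _ _ h1 h2 => exact ⟨reach_trans h1.1 h2.1, reach_trans h2.2 h1.2⟩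
  | mul _ _ h1 h2 => exact ⟨reach_append h1.1 h2.1, reach_append h1.2 h2.2⟩

theorem shorten (L : List (Syl R J)) (h : Sq (tm (FreeMonoid.ofList (L.map Syl.let)))) :
    ∃ L' : List (Syl R J), L'.length < L.length ∧ sprod L' = sprod L := by
  obtain ⟨p, q, a, e⟩ := h
  obtain ⟨p, rfl⟩ := tm_surj p
  obtain ⟨q, rfl⟩ := tm_surj q
  rw [← map_mul, ← map_mul, ← map_mul, tm_eq] at e
  have hlen := (rel_perm e).length_eq
  obtain ⟨L', h1, h2⟩ := (reach_of_rel e).1 L rfl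
  have h1 : L'.map Syl.let = p.toList ++ [a] ++ [a] ++ q.toList := h1
  obtain ⟨L12, L3, rfl, h1, e3⟩ := List.map_eq_append_iff.1 h1
  obtain ⟨L1, M2, rfl, h1, e2⟩ := List.map_eq_append_iff.1 h1
  obtain ⟨L0, M1, rfl, e0, e1⟩ := List.map_eq_append_iff.1 h1
  match M1, e1, M2, e2 with
  | [s], e1, [s'], e2 =>
    simp only [List.map_cons, List.map_nil, List.cons.injEq, and_true] at e1 e2
    refine ⟨L0 ++ [⟨s.y, s.k, s.f, s.hf, s.e + s'.e⟩] ++ L3, ?_, ?_⟩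
    · have hlen : L.length = (p.toList ++ [a] ++ [a] ++ q.toList).length := by
        have : (L.map Syl.let).length = (p.toList ++ [a] ++ [a] ++ q.toList).length := hlen
        simpa using this
      rw [← e0, ← e3] at hlen
      simp at hlen ⊢
      omega
    · rw [← h2]
      have hb : s'.base = s.base := base_eq (by rw [e1, e2])
      simp only [sprod_append, mul_assoc]
      congr 1
      rw [← mul_assoc]
      congr 1
      simp only [sprod, List.map_cons, List.map_nil, List.prod_cons, List.prod_nil, mul_one,
        Syl.val, hb]
      rw [← zpow_add]
      rfl

theorem Psi_sprod (L : List (Syl R J)) : Psi (sprod L) =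
    SemidirectProduct.inl ((L.map fun s => (s.let, s.e)).map fun s => ul s.1 ^ s.2).prod := by
  induction L with
  | nil => simp [sprod]
  | cons s L ih =>
    have : sprod (s :: L) = s.val * sprod L := by simp [sprod]
    rw [this, map_mul, ih, Psi_val, ← map_mul]
    simp

theorem Psi_sprod_inj (N : ℕ) : ∀ L : List (Syl R J), L.length ≤ N → Psi (sprod L) = 1 →
    sprod L = 1 := by
  induction N with
  | zero =>
    intro L hL _
    rw [List.length_eq_zero_iff.1 (Nat.le_zero.1 hL)]
    rfl
  | succ N ih =>
    intro L hL hp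
    by_cases h0 : L = []
    · rw [h0]; rfl
    by_cases h1 : ∃ s ∈ L, s.e = 0
    · obtain ⟨s, hs, he⟩ := h1
      obtain ⟨L1, L2, rfl⟩ := List.append_of_mem hs
      have : sprod (L1 ++ s :: L2) = sprod (L1 ++ L2) := by
        simp [sprod, Syl.val, he]
      rw [this] at hp ⊢
      refine ih _ ?_ hp
      simp at hL ⊢
      omega
    by_cases h2 : Sq (tm (FreeMonoid.ofList (L.map Syl.let)))
    · obtain ⟨L', hl, e⟩ := shorten L h2
      rw [← e] at hp ⊢
      exact ih L' (by omega) hp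
    exfalso
    push Not at h1
    refine ul_prod_ne (L.map fun s => (s.let, s.e)) (by simpa using h0) ?_ ?_ ?_
    · intro s hs
      obtain ⟨s', hs', rfl⟩ := List.mem_map.1 hs
      exact h1 s' hs'
    · rw [List.map_map]
      exact h2
    · rw [Psi_sprod] at hp
      exact SemidirectProduct.inl_injective (hp.trans (map_one _).symm)

theorem Psi_inj (g : Bgrp R J) (h : Psi g = 1) : g = 1 := by
  obtain ⟨L, f, hf, rfl⟩ := exists_repr g
  rw [map_mul, Psi_F f hf] at h
  have h1 := congrArg SemidirectProduct.right h
  rw [Psi_sprod] at h1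
  simp at h1
  have hf1 := Fsub_faithful f hf h1
  subst hf1
  rw [mul_one]
  exact Psi_sprod_inj _ L le_rfl (by simpa using h)

theorem B_order {G : Type} [Group G] (Φ : G →* Bgrp R J) (hΦ : Function.Injective Φ) :
    ∃ r : LinearOrder G, ∀ a b c : G, r.le a b → r.le (c * a) (c * b) ∧ r.le (a * c) (b * c) := by
  refine order_of_cone (fun g => PT (Psi (Φ g))) ?_ ?_ ?_ ?_
  · simpa using PT_one
  · intro a b ha hb
    simp only [map_mul]
    exact PT_mul ha hb (Psi_nice _)
  · intro g a ha
    simp only [map_mul, map_inv]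
    exact PT_conj ha (Psi_nice _)
  · intro a
    simp only [map_inv]
    rcases PT_tri (Psi_nice (Φ a)) with h | h
    · left
      apply hΦ
      rw [map_one]
      exact Psi_inj _ h
    · exact Or.inr h

end
end VFP

namespace VFP
section dl
variable {K : Type*} [Group K]

def cv (c : ℕ → K) (s : Letter) (n : ℕ) : K := if s = Letter.v then c n else 1

def dl (c : ℕ → K) (j : ℕ) : Word → K
  | [] => 1
  | s :: u => cv c s (j + u.length) * dl c j u

theorem dl_append (c : ℕ → K) (j : ℕ) (w u : Word) :
    dl c j (w ++ u) = dl c (j + u.length) w * dl c j u := by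
  induction w with
  | nil => simp [dl]
  | cons s w ih =>
    simp only [List.cons_append, dl, ih, mul_assoc, List.length_append]
    congr 2
    omega

theorem dl_shift (c : ℕ → K) (z : K) (k : ℕ) (h : ∀ n, k < n → c n * z = z * c (n + 1)) (j : ℕ)
    (hj : k < j) (w : Word) : dl c j w * z = z * dl c (j + 1) w := by
  induction w with
  | nil => simp [dl]
  | cons s w ih =>
    simp only [dl]
    have : cv c s (j + w.length) * z = z * cv c s (j + 1 + w.length) := by
      unfold cv
      split_ifs
      · rw [h _ (by omega)]; congr 2; omega
      · simp
    rw [mul_assoc, ih, ← mul_assoc, this, mul_assoc]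

theorem dl_map {L : Type*} [Group L] (f : K →* L) (c : ℕ → K) (j : ℕ) (w : Word) :
    f (dl c j w) = dl (fun n => f (c n)) j w := by
  induction w with
  | nil => simp [dl]
  | cons s w ih =>
    simp only [dl, map_mul, ih]
    congr 1
    unfold cv
    split_ifs <;> simp

/-- Key transport computation. -/
theorem transport (c : ℕ → K) (z Z : ℕ → K)
    (h : ∀ k n, k < n → c n * z k = z k * c (n + 1))
    (hZ : ∀ k n, k < n → Z n * z k = z k * Z (n + 1)) (w w' : Word) (p q : Word) (s : Letter)
    (t : Tgt) :
    ((dl c 0 (w ++ (p ++ [s] ++ q)))⁻¹ * Z (p ++ [s] ++ q).length * dl c 0 (w' ++ (p ++ [s] ++ q))) *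
      ((dl c 0 (s :: q))⁻¹ * z q.length * dl c 0 (tw t ++ q)) =
    ((dl c 0 (s :: q))⁻¹ * z q.length * dl c 0 (tw t ++ q)) *
    ((dl c 0 (w ++ (p ++ tw t ++ q)))⁻¹ * Z (p ++ tw t ++ q).length *
      dl c 0 (w' ++ (p ++ tw t ++ q))) := by
  have e1 : ∀ a : Word, dl c 0 (a ++ (p ++ [s] ++ q)) =
      dl c (q.length + 1) (a ++ p) * dl c 0 (s :: q) := by
    intro a
    have : a ++ (p ++ [s] ++ q) = (a ++ p) ++ (s :: q) := by simp
    rw [this, dl_append]; congr 2; simp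
  have e2 : ∀ a : Word, dl c 0 (a ++ (p ++ tw t ++ q)) =
      dl c (q.length + 1 + 1) (a ++ p) * dl c 0 (tw t ++ q) := by
    intro a
    have : a ++ (p ++ tw t ++ q) = (a ++ p) ++ (tw t ++ q) := by simp
    rw [this, dl_append]; congr 2; simp [tw]
  have l1 : (p ++ [s] ++ q).length = p.length + q.length + 1 := by simp; omega
  have l2 : (p ++ tw t ++ q).length = p.length + q.length + 1 + 1 := by simp [tw]; omega
  rw [e1, e1, e2, e2, l1, l2]
  have d := fun a => dl_shift c (z q.length) q.length (h q.length) (q.length + 1) (by omega) (a ++ p)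
  have d1 := d w
  have d2 := d w'
  have d3 := hZ q.length (p.length + q.length + 1) (by omega)
  generalize dl c (q.length + 1) (w ++ p) = P at *
  generalize dl c (q.length + 1 + 1) (w ++ p) = P' at *
  generalize dl c (q.length + 1) (w' ++ p) = Q at *
  generalize dl c (q.length + 1 + 1) (w' ++ p) = Q' at *
  generalize dl c 0 (s :: q) = S at *
  generalize dl c 0 (tw t ++ q) = T at *
  generalize z q.length = zz at *
  generalize Z (p.length + q.length + 1) = A at *
  generalize Z (p.length + q.length + 1 + 1) = A' at *
  have d1' : P⁻¹ * zz = zz * P'⁻¹ := by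
    rw [inv_mul_eq_iff_eq_mul, ← mul_assoc, d1]; group
  calc _ = S⁻¹ * P⁻¹ * A * (Q * zz) * T := by group
    _ = S⁻¹ * P⁻¹ * (A * zz) * Q' * T := by rw [d2]; group
    _ = S⁻¹ * (P⁻¹ * zz) * A' * Q' * T := by rw [d3]; group
    _ = _ := by rw [d1']; group

end dl

inductive JJ : Type
  | c | tau | e (i : G3) | f (j : G1)

abbrev RR := Letter × Tgt
abbrev BB := Bgrp RR JJ

def yc (n : ℕ) : BB := Y (some (Sum.inr JJ.c)) n
def yz (r : RR) (n : ℕ) : BB := Y (some (Sum.inl r)) n * Y none n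
def yt : BB := Y (some (Sum.inr JJ.tau)) 0

theorem Y_yz (y : Option (RR ⊕ JJ)) (r : RR) (k n : ℕ) (h : k < n) :
    Y y n * yz r k = yz r k * Y y (n + 1) := by
  rw [yz, ← mul_assoc, Y_a y r h, mul_assoc, Y_x y h, mul_assoc]

def EB (s : Letter) (t : Tgt) (u : Word) : BB :=
  (dl yc 0 (s :: u))⁻¹ * yz (s, t) u.length * dl yc 0 (tw t ++ u)

def AB (i : G3) (u : Word) : BB :=
  (dl yc 0 u)⁻¹ * Y (some (Sum.inr (JJ.e i))) u.length * dl yc 0 u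

theorem EB_rel (s₁ s₂ : Letter) (t₁ t₂ : Tgt) (p q : Word) :
    EB s₁ t₁ (p ++ [s₂] ++ q) * EB s₂ t₂ q = EB s₂ t₂ q * EB s₁ t₁ (p ++ tw t₂ ++ q) :=
  transport yc (yz (s₂, t₂)) (yz (s₁, t₁)) (fun k n h => Y_yz _ _ k n h)
    (fun k n h => by
      show Y _ n * Y _ n * _ = _ * (Y _ (n + 1) * Y _ (n + 1))
      rw [mul_assoc, Y_yz _ _ k n h, ← mul_assoc, Y_yz _ _ k n h, mul_assoc])
    [s₁] (tw t₁) p q s₂ t₂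

theorem AB_rel (i : G3) (s : Letter) (t : Tgt) (p q : Word) :
    AB i (p ++ [s] ++ q) * EB s t q = EB s t q * AB i (p ++ tw t ++ q) :=
  transport yc (yz (s, t)) (Y (some (Sum.inr (JJ.e i)))) (fun k n h => Y_yz _ _ k n h)
    (fun k n h => Y_yz _ _ k n h) [] [] p q s t

def vfLift {K : Type*} [Group K] (F : Gen → K)
    (h12 : ∀ a s₁ s₂ t₁ t₂ p q, F (.fam2 a s₁ t₁ (p ++ [s₂] ++ q)) * F (.fam2 a s₂ t₂ q) =
      F (.fam2 a s₂ t₂ q) * F (.fam2 a s₁ t₁ (p ++ tw t₂ ++ q)))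
    (hC : ∀ i, (i = G3.xvv ∨ i = G3.xvx) → ∀ s t p q h h',
      F (.fam2 .x s t q) * F (.fam3 i ⟨p ++ tw t ++ q, h⟩) =
      F (.fam3 i ⟨p ++ [s] ++ q, h'⟩) * F (.fam2 .v s t q))
    (hD : ∀ i, (i = G3.vxx ∨ i = G3.vxv) → ∀ s t p q h h',
      F (.fam2 .v s t q) * F (.fam3 i ⟨p ++ tw t ++ q, h⟩) =
      F (.fam3 i ⟨p ++ [s] ++ q, h'⟩) * F (.fam2 .x s t q)) : VF →* K :=
  PresentedGroup.toGroup (f := F) (by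
    intro g hg
    have hg : VFRel g := hg
    cases hg <;> simp only [map_mul, map_inv, X, FreeGroup.lift_apply_of, mul_inv_eq_one]
    · apply h12
    · apply hC _ (Or.inl rfl)
    · apply hC _ (Or.inr rfl)
    · apply hD _ (Or.inl rfl)
    · apply hD _ (Or.inr rfl))

def vg (g : Gen) : VF := PresentedGroup.of g

theorem vfLift_vg {K : Type*} [Group K] (F : Gen → K) (h12) (hC) (hD) (g : Gen) :
    vfLift F h12 hC hD (vg g) = F g := by
  simp [vfLift, vg]

theorem vrel {A B C D : Gen} (h : VFRel (X A * X B * (X C * X D)⁻¹)) :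
    vg A * vg B = vg C * vg D := by
  have := PresentedGroup.mk_eq_one_iff.2
    (Subgroup.subset_normalClosure (show X A * X B * (X C * X D)⁻¹ ∈ VFrels from h))
  rw [map_mul, map_inv, mul_inv_eq_one, map_mul, map_mul] at this
  exact this

theorem v12 (a s₁ s₂ : Letter) (t₁ t₂ : Tgt) (p q : Word) :
    vg (.fam2 a s₁ t₁ (p ++ [s₂] ++ q)) * vg (.fam2 a s₂ t₂ q) =
      vg (.fam2 a s₂ t₂ q) * vg (.fam2 a s₁ t₁ (p ++ tw t₂ ++ q)) :=
  vrel (VFRel.r12 a s₁ s₂ t₁ t₂ p q)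

theorem vC (i : G3) (hi : i = G3.xvv ∨ i = G3.xvx) (s : Letter) (t : Tgt) (p q : Word) (h) (h') :
      vg (.fam2 .x s t q) * vg (.fam3 i ⟨p ++ tw t ++ q, h⟩) =
      vg (.fam3 i ⟨p ++ [s] ++ q, h'⟩) * vg (.fam2 .v s t q) := by
  rcases hi with rfl | rfl
  · exact vrel (VFRel.r3 s t p q)
  · exact vrel (VFRel.r4 s t p q)

theorem vD (i : G3) (hi : i = G3.vxx ∨ i = G3.vxv) (s : Letter) (t : Tgt) (p q : Word) (h) (h') :
      vg (.fam2 .v s t q) * vg (.fam3 i ⟨p ++ tw t ++ q, h⟩) =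
      vg (.fam3 i ⟨p ++ [s] ++ q, h'⟩) * vg (.fam2 .x s t q) := by
  rcases hi with rfl | rfl
  · exact vrel (VFRel.r5 s t p q)
  · exact vrel (VFRel.r6 s t p q)

/-- `true` for the rules whose left-hand side is `x`. -/
def dirC : G3 → Bool
  | .xvv => true
  | .xvx => true
  | .vxx => false
  | .vxv => false

def PhiF : Gen → BB
  | .fam1 j => Y (some (Sum.inr (JJ.f j))) 0
  | .fam2 .x s t u => EB s t u
  | .fam2 .v s t u => yt * EB s t u * yt⁻¹
  | .fam3 i u => if dirC i then AB i u * yt⁻¹ else (AB i u * yt⁻¹)⁻¹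

def Phi : VF →* BB := vfLift PhiF (by
    intro a s₁ s₂ t₁ t₂ p q
    have := EB_rel s₁ s₂ t₁ t₂ p q
    cases a
    · exact this
    · show yt * _ * yt⁻¹ * (yt * _ * yt⁻¹) = yt * _ * yt⁻¹ * (yt * _ * yt⁻¹)
      rw [conj_mul, conj_mul, this]) (by
    intro i hi s t p q h h'
    have := AB_rel i s t p q
    have hd : dirC i = true := by rcases hi with rfl | rfl <;> rfl
    simp only [PhiF, hd, if_true]
    rw [← mul_assoc, ← this]
    group) (by
    intro i hi s t p q h h'
    have := AB_rel i s t p q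
    have hd : dirC i = false := by rcases hi with rfl | rfl <;> rfl
    simp only [PhiF, hd, Bool.false_eq_true, if_false]
    rw [mul_inv_rev, mul_inv_rev, inv_inv]
    have e : EB s t q * (AB i (p ++ tw t ++ q))⁻¹ = (AB i (p ++ [s] ++ q))⁻¹ * EB s t q := by
      rw [mul_inv_eq_iff_eq_mul, mul_assoc, ← this]; group
    rw [mul_assoc yt _ (EB s t q), ← e]
    group)

theorem Phi_vg (g : Gen) : Phi (vg g) = PhiF g := vfLift_vg ..

end VFP

namespace VFP

section trans
variable {K : Type*} [Group K] (E : Letter → Tgt → Word → K)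

/-- Families of elements that are transported by the rewriting elements `E s t q`. -/
def IsTr (A : Word → K) : Prop :=
  ∀ p s t q, A (p ++ [s] ++ q) * E s t q = E s t q * A (p ++ tw t ++ q)

variable {E}

theorem IsTr.mul {A B : Word → K} (hA : IsTr E A) (hB : IsTr E B) :
    IsTr E (fun u => A u * B u) := by
  intro p s t q
  show A _ * B _ * _ = _ * (A _ * B _)
  rw [mul_assoc, hB, ← mul_assoc, hA, mul_assoc]

theorem IsTr.inv {A : Word → K} (hA : IsTr E A) : IsTr E (fun u => (A u)⁻¹) := by
  intro p s t q
  show (A _)⁻¹ * _ = _ * (A _)⁻¹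
  rw [inv_mul_eq_iff_eq_mul, ← mul_assoc, hA]
  group

theorem IsTr.shift {A : Word → K} (hA : IsTr E A) (s : Letter) : IsTr E (fun u => A (s :: u)) := by
  intro p s' t q
  exact hA (s :: p) s' t q

theorem IsTr.of_nil {A : Word → K} (hA : ∀ u, u ≠ [] → A u = 1) : IsTr E A := by
  intro p s t q
  rw [hA _ (by simp), hA _ (by simp [tw])]
  simp

theorem IsTr.one : IsTr E (fun _ => 1) := IsTr.of_nil (fun _ _ => rfl)

variable (E)

def xx : Tgt := (Letter.x, Letter.x)

def cc (u : Word) : K := E .x xx u * (E .v xx u)⁻¹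

def as1 (s : Letter) (u : Word) : K := if s = Letter.v then cc E u else 1

def at2 (t : Tgt) (u : Word) : K := as1 E t.1 (Letter.x :: u) * as1 E t.2 u

def Zf (r : RR) (u : Word) : K := as1 E r.1 u * E r.1 r.2 u * (at2 E r.2 u)⁻¹

def rx (n : ℕ) : Word := List.replicate n Letter.x

variable {E}
variable (hE : ∀ s t, IsTr E (E s t))
include hE

theorem cc_tr : IsTr E (cc E) := (hE _ _).mul (hE _ _).inv

theorem as1_tr (s : Letter) : IsTr E (as1 E s) := by
  cases s
  · exact IsTr.one
  · exact cc_tr hE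

theorem at2_tr (t : Tgt) : IsTr E (at2 E t) := ((as1_tr hE t.1).shift _).mul (as1_tr hE t.2)

theorem Zf_tr (r : RR) : IsTr E (Zf E r) :=
  ((as1_tr hE r.1).mul (hE _ _)).mul (at2_tr hE r.2).inv

omit hE in
theorem tr_as1 {A : Word → K} (hA : IsTr E A) (s : Letter) (p u : Word) :
    A (p ++ Letter.x :: u) * as1 E s u = as1 E s u * A (p ++ s :: u) := by
  cases s
  · simp [as1]
  · have h1 := hA p .x xx u
    have h2 := hA p .v xx u
    simp only [List.append_assoc, List.cons_append, List.nil_append] at h1 h2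
    show _ * (_ * _⁻¹) = (_ * _⁻¹) * _
    rw [← mul_assoc, h1, mul_assoc, mul_assoc, mul_right_inj, eq_inv_mul_iff_mul_eq, ← mul_assoc,
      ← h2]
    group

omit hE in
theorem tr_at2 {A : Word → K} (hA : IsTr E A) (t : Tgt) (p u : Word) :
    A (p ++ Letter.x :: Letter.x :: u) * at2 E t u = at2 E t u * A (p ++ (tw t ++ u)) := by
  have h1 := tr_as1 hA t.1 p (Letter.x :: u)
  have h2 := tr_as1 hA t.2 (p ++ [t.1]) u
  simp only [List.append_assoc, List.cons_append, List.nil_append] at h2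
  show _ * (_ * _) = (_ * _) * _
  rw [← mul_assoc, h1, mul_assoc, h2, mul_assoc]
  rfl

omit hE in
theorem tr_Zf {A : Word → K} (hA : IsTr E A) (r : RR) (p u : Word) :
    A (p ++ Letter.x :: u) * Zf E r u = Zf E r u * A (p ++ Letter.x :: Letter.x :: u) := by
  have h1 := tr_as1 hA r.1 p u
  have h2 := hA p r.1 r.2 u
  have h3 := tr_at2 hA r.2 p u
  simp only [List.append_assoc, List.cons_append, List.nil_append] at h2
  have h4 : A (p ++ (tw r.2 ++ u)) * (at2 E r.2 u)⁻¹ =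
      (at2 E r.2 u)⁻¹ * A (p ++ Letter.x :: Letter.x :: u) := by
    rw [mul_inv_eq_iff_eq_mul, mul_assoc, h3]; group
  unfold Zf
  rw [← mul_assoc, ← mul_assoc, h1, mul_assoc (as1 E _ _), h2, mul_assoc, mul_assoc, h4]
  simp only [mul_assoc]

omit hE in
theorem rx_split {k n : ℕ} (h : k < n) : ∃ p, rx n = p ++ Letter.x :: rx k ∧
    rx (n + 1) = p ++ Letter.x :: Letter.x :: rx k := by
  obtain ⟨a, rfl⟩ : ∃ a, n = a + (k + 1) := ⟨n - (k + 1), by omega⟩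
  refine ⟨rx a, ?_, ?_⟩
  · unfold rx; rw [List.replicate_add, List.replicate_succ]
  · unfold rx
    rw [show a + (k + 1) + 1 = a + (k + 1 + 1) by ring, List.replicate_add, List.replicate_succ,
      List.replicate_succ]

omit hE in
theorem tr_Zf_n {A : Word → K} (hA : IsTr E A) (r : RR) {k n : ℕ} (h : k < n) :
    A (rx n) * Zf E r (rx k) = Zf E r (rx k) * A (rx (n + 1)) := by
  obtain ⟨p, h1, h2⟩ := rx_split h
  rw [h1, h2, tr_Zf hA]

omit hE in
theorem tr_E_n {A : Word → K} (hA : IsTr E A) {k n : ℕ} (h : k < n) :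
    A (rx n) * E .x xx (rx k) = E .x xx (rx k) * A (rx (n + 1)) := by
  obtain ⟨p, h1, h2⟩ := rx_split h
  have := hA p .x xx (rx k)
  simpa [h1, h2, tw, xx] using this

variable (E) in
def cs (n : ℕ) : K := cc E (rx n)

omit hE in
theorem cv_cs (s : Letter) (n : ℕ) : cv (cs E) s n = as1 E s (rx n) := rfl

omit hE in
theorem tr_dl {A : Word → K} (hA : IsTr E A) (u : Word) : ∀ p : Word,
    A (p ++ rx u.length) * dl (cs E) 0 u = dl (cs E) 0 u * A (p ++ u) := by
  induction u with
  | nil => intro p; simp [dl, rx]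
  | cons s u ih =>
    intro p
    have h1 := tr_as1 hA s p (rx u.length)
    have h2 := ih (p ++ [s])
    simp only [List.append_assoc, List.cons_append, List.nil_append] at h2
    rw [List.length_cons, dl, zero_add, cv_cs, ← mul_assoc, mul_assoc (as1 E _ _), ← h2,
      ← mul_assoc, ← h1]
    rfl

theorem dl_s (s : Letter) (u : Word) :
    dl (cs E) 0 (s :: u) = dl (cs E) 0 u * as1 E s u := by
  have := tr_dl (as1_tr hE s) u []
  rw [List.nil_append, List.nil_append] at this
  rw [← this, dl, zero_add, cv_cs]

theorem dl_t (t : Tgt) (u : Word) :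
    dl (cs E) 0 (tw t ++ u) = dl (cs E) 0 u * at2 E t u := by
  have := tr_dl (at2_tr hE t) u []
  rw [List.nil_append, List.nil_append] at this
  rw [← this]
  show cv _ _ _ * (cv _ _ _ * _) = _
  rw [zero_add, zero_add, cv_cs, cv_cs, ← mul_assoc]
  rfl

theorem back_E (s : Letter) (t : Tgt) (u : Word) :
    (dl (cs E) 0 (s :: u))⁻¹ * Zf E (s, t) (rx u.length) * dl (cs E) 0 (tw t ++ u) = E s t u := by
  rw [dl_s hE, dl_t hE]
  have := tr_dl (Zf_tr hE (s, t)) u []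
  rw [List.nil_append, List.nil_append] at this
  rw [mul_assoc, ← mul_assoc (Zf E _ _), this]
  unfold Zf
  group

end trans

section HH
/-- The common model of the subgroups generated by the `X_{x,…}` and the `X_{v,…}`. -/
def Hrels : Set (FreeGroup (Letter × Tgt × Word)) :=
  {g | ∃ (s₁ s₂ : Letter) (t₁ t₂ : Tgt) (p q : Word),
    g = FreeGroup.of (s₁, t₁, p ++ [s₂] ++ q) * FreeGroup.of (s₂, t₂, q) *
      (FreeGroup.of (s₂, t₂, q) * FreeGroup.of (s₁, t₁, p ++ tw t₂ ++ q))⁻¹}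

abbrev HG := PresentedGroup Hrels

def hgen (s : Letter) (t : Tgt) (u : Word) : HG := PresentedGroup.of (s, t, u)

theorem h12 (s₁ s₂ : Letter) (t₁ t₂ : Tgt) (p q : Word) :
    hgen s₁ t₁ (p ++ [s₂] ++ q) * hgen s₂ t₂ q =
      hgen s₂ t₂ q * hgen s₁ t₁ (p ++ tw t₂ ++ q) := by
  have := PresentedGroup.mk_eq_one_iff.2
    (Subgroup.subset_normalClosure (show _ ∈ Hrels from ⟨s₁, s₂, t₁, t₂, p, q, rfl⟩))
  rw [map_mul, map_inv, mul_inv_eq_one, map_mul, map_mul] at this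
  exact this

def hmap (a : Letter) : HG →* VF :=
  PresentedGroup.toGroup (f := fun g => vg (.fam2 a g.1 g.2.1 g.2.2)) (by
    rintro g ⟨s₁, s₂, t₁, t₂, p, q, rfl⟩
    simp only [map_mul, map_inv, FreeGroup.lift_apply_of, mul_inv_eq_one]
    exact v12 a s₁ s₂ t₁ t₂ p q)

theorem hmap_hgen (a s : Letter) (t : Tgt) (u : Word) : hmap a (hgen s t u) = vg (.fam2 a s t u) := by
  simp [hmap, hgen]

def retF : Gen → HG
  | .fam1 _ => 1
  | .fam2 _ s t u => hgen s t u
  | .fam3 _ _ => 1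

def ret : VF →* HG := vfLift retF (fun _ s₁ s₂ t₁ t₂ p q => h12 s₁ s₂ t₁ t₂ p q)
  (fun _ _ _ _ _ _ _ _ => by simp [retF]) (fun _ _ _ _ _ _ _ _ => by simp [retF])

theorem hmap_inj (a : Letter) : Function.Injective (hmap a) := by
  have : ret.comp (hmap a) = MonoidHom.id HG := by
    apply PresentedGroup.ext
    rintro ⟨s, t, u⟩
    show ret (hmap a (hgen s t u)) = hgen s t u
    rw [hmap_hgen]
    exact vfLift_vg ..
  exact Function.LeftInverse.injective (g := ret) (fun g => DFunLike.congr_fun this g)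

theorem exists_K : ∃ (K : Type) (_ : Group K) (o : VF →* K) (τ : K), Function.Injective o ∧
    ∀ s t u, τ * o (vg (.fam2 .x s t u)) = o (vg (.fam2 .v s t u)) * τ := by
  let φ : (hmap .x).range ≃* (hmap .v).range :=
    (MonoidHom.ofInjective (hmap_inj .x)).symm.trans (MonoidHom.ofInjective (hmap_inj .v))
  refine ⟨HNNExtension VF _ _ φ, inferInstance, HNNExtension.of, HNNExtension.t,
    HNNExtension.of_injective φ, ?_⟩
  intro s t u
  have := HNNExtension.t_mul_of (φ := φ) (MonoidHom.ofInjective (hmap_inj .x) (hgen s t u))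
  simp only [φ, MulEquiv.trans_apply, MulEquiv.symm_apply_apply, MonoidHom.ofInjective_apply,
    hmap_hgen] at this
  exact this

end HH

section final
variable {K : Type} [Group K] (o : VF →* K) (τ : K)

def EE (s : Letter) (t : Tgt) (u : Word) : K := o (vg (.fam2 .x s t u))

theorem EE_tr (s : Letter) (t : Tgt) : IsTr (EE o) (EE o s t) := by
  intro p s' t' q
  unfold EE
  rw [← map_mul, ← map_mul, v12]

open Classical in
noncomputable def backA : Option (RR ⊕ JJ) → Word → K
  | none => EE o .x xx
  | some (Sum.inl r) => fun u => Zf (EE o) r u * (EE o .x xx u)⁻¹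
  | some (Sum.inr .c) => cc (EE o)
  | some (Sum.inr .tau) => fun u => if u = [] then τ else 1
  | some (Sum.inr (.e i)) => fun u => if h : u ≠ [] then
      (if dirC i then o (vg (.fam3 i ⟨u, h⟩)) * τ else (o (vg (.fam3 i ⟨u, h⟩)))⁻¹ * τ) else 1
  | some (Sum.inr (.f j)) => fun u => if u = [] then o (vg (.fam1 j)) else 1

theorem dirC_true {i : G3} (h : dirC i = true) : i = G3.xvv ∨ i = G3.xvx := by
  cases i <;> simp [dirC] at h ⊢

theorem dirC_false {i : G3} (h : ¬ dirC i = true) : i = G3.vxx ∨ i = G3.vxv := by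
  cases i <;> simp [dirC] at h ⊢

variable (hτ : ∀ s t u, τ * o (vg (.fam2 .x s t u)) = o (vg (.fam2 .v s t u)) * τ)
include hτ

theorem backA_tr (y : Option (RR ⊕ JJ)) : IsTr (EE o) (backA o τ y) := by
  match y with
  | none => exact EE_tr o _ _
  | some (Sum.inl r) => exact (Zf_tr (EE_tr o) r).mul (EE_tr o _ _).inv
  | some (Sum.inr .c) => exact cc_tr (EE_tr o)
  | some (Sum.inr .tau) => exact IsTr.of_nil (fun u hu => by simp [backA, hu])
  | some (Sum.inr (.f j)) => exact IsTr.of_nil (fun u hu => by simp [backA, hu])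
  | some (Sum.inr (.e i)) =>
    intro p s t q
    have hn1 : p ++ [s] ++ q ≠ [] := by simp
    have hn2 : p ++ tw t ++ q ≠ [] := by simp [tw]
    simp only [backA, dif_pos hn1, dif_pos hn2, EE]
    by_cases hd : dirC i = true
    · rw [if_pos hd, if_pos hd, mul_assoc, hτ, ← mul_assoc, ← mul_assoc, ← map_mul, ← map_mul,
        vC i (dirC_true hd) s t p q hn2 hn1]
    · rw [if_neg hd, if_neg hd, mul_assoc, hτ, ← mul_assoc, ← mul_assoc]
      congr 1
      have := congrArg o (vD i (dirC_false hd) s t p q hn2 hn1)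
      rw [map_mul, map_mul] at this
      rw [inv_mul_eq_iff_eq_mul, ← mul_assoc, ← this]
      group

noncomputable def back : BB →* K := Blift (fun y n => backA o τ y (rx n))
  (by
    intro y n k h
    exact tr_E_n (backA_tr o τ hτ y) h)
  (by
    intro y r n k h
    have h1 := tr_E_n (backA_tr o τ hτ y) h
    have h2 := tr_Zf_n (backA_tr o τ hτ y) r h
    show _ * (_ * _⁻¹) = (_ * _⁻¹) * _
    rw [← mul_assoc, h2, mul_assoc, mul_assoc, mul_right_inj, eq_inv_mul_iff_mul_eq, ← mul_assoc,
      ← h1]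
    group)

theorem back_Y (y : Option (RR ⊕ JJ)) (n : ℕ) : back o τ hτ (Y y n) = backA o τ y (rx n) :=
  Blift_Y ..

theorem back_dl (w : Word) : back o τ hτ (dl yc 0 w) = dl (cs (EE o)) 0 w := by
  rw [dl_map]
  congr 1
  funext n
  exact back_Y o τ hτ _ n

theorem back_yt : back o τ hτ yt = τ := by
  rw [yt, back_Y]
  simp [backA, rx]

theorem back_yz (r : RR) (n : ℕ) : back o τ hτ (yz r n) = Zf (EE o) r (rx n) := by
  rw [yz, map_mul, back_Y, back_Y]
  simp [backA]

theorem back_EB (s : Letter) (t : Tgt) (u : Word) : back o τ hτ (EB s t u) = EE o s t u := by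
  rw [EB, map_mul, map_mul, map_inv, back_dl, back_dl, back_yz, back_E (EE_tr o)]

theorem back_AB (i : G3) (u : Word) :
    back o τ hτ (AB i u) = backA o τ (some (Sum.inr (.e i))) u := by
  have := tr_dl (backA_tr o τ hτ (some (Sum.inr (.e i)))) u []
  rw [List.nil_append, List.nil_append] at this
  rw [AB, map_mul, map_mul, map_inv, back_dl, back_Y, mul_assoc, this]
  group

theorem back_Phi (g : VF) : back o τ hτ (Phi g) = o g := by
  have : (back o τ hτ).comp Phi = o := by
    apply PresentedGroup.ext
    intro g
    show back o τ hτ (Phi (vg g)) = o (vg g)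
    rw [Phi_vg]
    match g with
    | .fam1 j => rw [PhiF, back_Y]; simp [backA, rx]
    | .fam2 .x s t u => rw [PhiF, back_EB]; rfl
    | .fam2 .v s t u =>
      rw [PhiF, map_mul, map_mul, map_inv, back_EB, back_yt, mul_inv_eq_iff_eq_mul]
      exact hτ s t u
    | .fam3 i ⟨u, hu⟩ =>
      rw [PhiF]
      by_cases hd : dirC i = true
      · rw [if_pos hd, map_mul, map_inv, back_AB, back_yt]
        simp only [backA, dif_pos hu, if_pos hd]
        group
      · rw [if_neg hd, map_inv, map_mul, map_inv, back_AB, back_yt]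
        simp only [backA, dif_pos hu, if_neg hd]
        group
  exact DFunLike.congr_fun this g

end final

theorem Phi_inj : Function.Injective Phi := by
  obtain ⟨K, _, o, τ, ho, hτ⟩ := exists_K
  intro a b h
  apply ho
  rw [← back_Phi o τ hτ a, h, back_Phi]

end VFP

/-- VF is totally orderable (bi-orderable): there is a linear order on VF invariant
under both left and right multiplication. -/
theorem VF_totally_orderable :
    ∃ r : LinearOrder VF, ∀ a b c : VF, r.le a b → r.le (c * a) (c * b) ∧ r.le (a * c) (b * c) := by
  exact VFP.B_order VFP.Phi VFP.Phi_inj
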